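/- arXiv:2407.02559 — 5 statements merged into one kernel-verified Lean document; each statement's English description precedes it below -/
import Mathlib

section
/- Let G = (V,E) be a network with source s and sink t such that G is connected as a graph, and let n ≥ 1. Then the number m_n of labelings α of G attaining the minimum of H_G^{(n)} satisfies m_n ≤ (Cat_n)^{|V|}, where Cat_n = (1/(n+1))·binom(2n, n) is the n-th Catalan number. -/
/-!
The bound holds because every label of a minimizer lies on a geodesic from `1` to `γ` in the Cayley
metric `d`, and only `catalan n` permutations do.

*Labels are geodesic* (`mem_geodesicSet_of_minimizer`). Put `N = d(1, γ) = n - 1` and let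
`φ x = d(1, α x) - d(α x, γ)`, a potential running from `-N` at the source to `N` at the sink. For
each of the `2N` thresholds `k` in `(-N, N]`, the labeling equal to `1` on `{φ < k}` and to `γ`
elsewhere competes with `α`. Summing the `2N` inequalities given by minimality yields
`2N · H(α) ≤ N · ∑ |φ x - φ y|` (sum over the edges), while the triangle inequality gives
`|φ x - φ y| ≤ 2 d(α x, α y)`. Hence equality holds on every edge, which forces `d(1, α ·)` and
`d(α ·, γ)` to change by opposite amounts. Their sum is thus constant on the connected graph, and it
equals `N` at the source. Neither Menger's theorem nor max-flow min-cut is needed.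

*Counting geodesics* (`ncard_geodesicSet_formPerm_le`). If `σ` lies on a geodesic to the cycle
`(a … j …)` of the list `u ++ j :: w` with head `a`, and `σ j = a`, then `swap a j * σ` fixes `j` and
lies on a geodesic to the product of the disjoint cycles of `u` and `w`; such permutations split
as products of geodesic permutations for the two cycles. Summing over the position of `j` gives the
Catalan recursion.

Both parts rest on the identification of the Cayley length with the codimension of the space of
invariant functions (`cayleyLength_eq_codimFix`). It gives the triangle inequality, and it shows that
a permutation on a geodesic to `γ` preserves each `γ`-invariant set.
-/

/-- The number of cycles of a permutation of `Fin n`, counting fixed points as cycles. -/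
def cycleCount {n : ℕ} (σ : Equiv.Perm (Fin n)) : ℕ :=
  σ.cycleType.card + (n - σ.support.card)

/-- The Cayley length `|σ| = n - c(σ)` of a permutation of `Fin n`. -/
def cayleyLength {n : ℕ} (σ : Equiv.Perm (Fin n)) : ℕ := n - cycleCount σ

/-- The Cayley distance `d(σ, τ) = n - c(σ⁻¹ τ)` on `S_n`. -/
def cayleyDist {n : ℕ} (σ τ : Equiv.Perm (Fin n)) : ℕ := cayleyLength (σ⁻¹ * τ)

lemma cayleyDist_comm {n : ℕ} (σ τ : Equiv.Perm (Fin n)) :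
    cayleyDist σ τ = cayleyDist τ σ := by
  unfold cayleyDist cayleyLength cycleCount
  rw [show τ⁻¹ * σ = (σ⁻¹ * τ)⁻¹ by group]
  rw [Equiv.Perm.cycleType_inv, Equiv.Perm.support_inv]

/-- The contribution `d(α x, α y)` of an (undirected) edge `{x, y}` to the Hamiltonian. -/
def edgeTerm {V : Type*} {n : ℕ} (α : V → Equiv.Perm (Fin n)) : Sym2 V → ℕ :=
  Sym2.lift ⟨fun x y => cayleyDist (α x) (α y), fun _ _ => cayleyDist_comm _ _⟩

/-- The Hamiltonian `H_G^{(n)}(α) = Σ_{{x,y} ∈ E} d(α x, α y)` of a labeling of the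
vertices of a graph by permutations. -/
noncomputable def hamiltonian {V : Type*} (G : SimpleGraph V) {n : ℕ}
    (α : V → Equiv.Perm (Fin n)) : ℕ :=
  ∑ᶠ e ∈ G.edgeSet, edgeTerm α e

/-- `maxflow G s t` is the maximum cardinality of a collection of pairwise edge-disjoint
paths from `s` to `t` in `G`. -/
noncomputable def maxflow {V : Type*} (G : SimpleGraph V) (s t : V) : ℕ :=
  sSup {k | ∃ π : Fin k → G.Walk s t, (∀ i, (π i).IsPath) ∧
    ∀ i j, i ≠ j → List.Disjoint (π i).edges (π j).edges}

section

open Equiv Module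

/-! ### The Cayley length as a codimension -/

section CayleyLength

variable {α : Type*}

/-- The space of `ℚ`-valued functions on `α` invariant under the permutation `σ`. -/
def fixSpace (σ : Perm α) : Submodule ℚ (α → ℚ) where
  carrier := {f | ∀ x, f (σ x) = f x}
  zero_mem' := fun _ => rfl
  add_mem' := fun hf hg x => by simp [hf x, hg x]
  smul_mem' := fun c f hf x => by simp [hf x]

lemma mem_fixSpace {σ : Perm α} {f : α → ℚ} : f ∈ fixSpace σ ↔ ∀ x, f (σ x) = f x := Iff.rfl

lemma fixSpace_inf_le_mul (σ τ : Perm α) : fixSpace σ ⊓ fixSpace τ ≤ fixSpace (σ * τ) := by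
  rintro f ⟨hσ, hτ⟩ x
  rw [Perm.mul_apply, hσ, hτ]

variable [Fintype α]

/-- The codimension of the space of `σ`-invariant functions; it is the Cayley length of `σ`. -/
noncomputable def codimFix (σ : Perm α) : ℕ := Fintype.card α - finrank ℚ (fixSpace σ)

lemma codimFix_add_finrank (σ : Perm α) :
    codimFix σ + finrank ℚ (fixSpace σ) = Fintype.card α := by
  have h := Submodule.finrank_le (fixSpace σ)
  rw [finrank_fintype_fun_eq_card] at h
  unfold codimFix
  omega

lemma codimFix_one : codimFix (1 : Perm α) = 0 := by
  have h : fixSpace (1 : Perm α) = ⊤ := by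
    rw [eq_top_iff]
    intro f _ x
    rfl
  have h' := codimFix_add_finrank (1 : Perm α)
  rw [h, finrank_top, finrank_fintype_fun_eq_card] at h'
  omega

lemma codimFix_mul_le (σ τ : Perm α) : codimFix (σ * τ) ≤ codimFix σ + codimFix τ := by
  have h1 := Submodule.finrank_sup_add_finrank_inf_eq (fixSpace σ) (fixSpace τ)
  have h2 := Submodule.finrank_le (fixSpace σ ⊔ fixSpace τ)
  rw [finrank_fintype_fun_eq_card] at h2
  have h3 := Submodule.finrank_mono (fixSpace_inf_le_mul σ τ)
  have := codimFix_add_finrank σ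
  have := codimFix_add_finrank τ
  have := codimFix_add_finrank (σ * τ)
  omega

/-- If lengths add up in `σ * τ`, the invariant functions of `σ * τ` are exactly the common
invariant functions of the factors; in particular they are invariant under `σ`. -/
lemma fixSpace_mul_le_of_codimFix_add {σ τ : Perm α}
    (h : codimFix σ + codimFix τ = codimFix (σ * τ)) : fixSpace (σ * τ) ≤ fixSpace σ := by
  have h1 := Submodule.finrank_sup_add_finrank_inf_eq (fixSpace σ) (fixSpace τ)
  have h2 := Submodule.finrank_le (fixSpace σ ⊔ fixSpace τ)
  rw [finrank_fintype_fun_eq_card] at h2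
  have h4 : fixSpace σ ⊓ fixSpace τ = fixSpace (σ * τ) := by
    apply Submodule.eq_of_le_of_finrank_le (fixSpace_inf_le_mul σ τ)
    have := codimFix_add_finrank σ
    have := codimFix_add_finrank τ
    have := codimFix_add_finrank (σ * τ)
    omega
  rw [← h4]
  exact inf_le_left

/-- Lengths add up for permutations with disjoint supports: one moves only points of `S`,
the other only points outside `S`. -/
lemma codimFix_mul_of_disjoint (S : Set α) {σ τ : Perm α} (hσ : ∀ x ∉ S, σ x = x)
    (hτ : ∀ x ∈ S, τ x = x) : codimFix (σ * τ) = codimFix σ + codimFix τ := by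
  classical
  have hσS : ∀ x, σ x ∈ S ↔ x ∈ S := by
    intro x
    by_cases hx : x ∈ S
    · simp only [hx, iff_true]
      by_contra h
      exact h (by rwa [σ.injective (hσ _ h)])
    · rw [hσ x hx]
  have hτS : ∀ x, τ x ∈ S ↔ x ∈ S := by
    intro x
    by_cases hx : x ∈ S
    · rw [hτ x hx]
    · simp only [hx, iff_false]
      intro h
      exact hx (by rwa [τ.injective (hτ _ h)] at h)
  have hinf : fixSpace σ ⊓ fixSpace τ = fixSpace (σ * τ) := by
    apply le_antisymm (fixSpace_inf_le_mul σ τ)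
    intro f hf
    rw [mem_fixSpace] at hf
    refine ⟨fun x => ?_, fun x => ?_⟩
    · by_cases hx : x ∈ S
      · have := hf x
        rwa [Perm.mul_apply, hτ x hx] at this
      · rw [hσ x hx]
    · by_cases hx : x ∈ S
      · rw [hτ x hx]
      · have := hf x
        rwa [Perm.mul_apply, hσ _ (mt (hτS x).1 hx)] at this
  have hsup : fixSpace σ ⊔ fixSpace τ = ⊤ := by
    rw [eq_top_iff]
    intro f _
    refine Submodule.mem_sup.2 ⟨fun x => if x ∈ S then 0 else f x, fun x => ?_,
      fun x => if x ∈ S then f x else 0, fun x => ?_, ?_⟩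
    · by_cases hx : x ∈ S
      · simp [hσS, hx]
      · simp [hσ x hx]
    · by_cases hx : x ∈ S
      · simp [hτ x hx]
      · simp [hτS, hx]
    · ext x
      by_cases hx : x ∈ S <;> simp [hx]
  have h1 := Submodule.finrank_sup_add_finrank_inf_eq (fixSpace σ) (fixSpace τ)
  rw [hsup, hinf, finrank_top, finrank_fintype_fun_eq_card] at h1
  have := codimFix_add_finrank σ
  have := codimFix_add_finrank τ
  have := codimFix_add_finrank (σ * τ)
  omega

variable [DecidableEq α]

/-- Inserting a fixed point `a` of `π` into the cycle of `b` raises the length by one: the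
invariant functions are cut down by the single equation `f a = f b`. -/
lemma codimFix_swap_mul {π : Perm α} {a b : α} (ha : π a = a) (hab : a ≠ b) :
    codimFix (swap a b * π) = codimFix π + 1 := by
  let φ : Dual ℚ (fixSpace π) :=
    ((LinearMap.proj a : (α → ℚ) →ₗ[ℚ] ℚ) - LinearMap.proj b).comp (fixSpace π).subtype
  have hφ : φ ≠ 0 := by
    intro h
    have hmem : (Pi.single a 1 : α → ℚ) ∈ fixSpace π := by
      intro x
      by_cases hx : x = a
      · rw [hx, ha]
      · have : π x ≠ a := fun h => hx (π.injective (h.trans ha.symm))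
        simp [hx, this]
    have := LinearMap.congr_fun h ⟨_, hmem⟩
    simp [φ, hab.symm] at this
  have h1 := Module.Dual.finrank_ker_add_one_of_ne_zero hφ
  have h2 : fixSpace (swap a b * π) = (LinearMap.ker φ).map (fixSpace π).subtype := by
    ext f
    simp only [Submodule.mem_map, LinearMap.mem_ker, Submodule.subtype_apply, Subtype.exists,
      exists_and_right, exists_eq_right]
    have hφf : ∀ hf : f ∈ fixSpace π, φ ⟨f, hf⟩ = f a - f b := fun hf => by simp [φ]
    constructor
    · intro hf
      rw [mem_fixSpace] at hf
      have hba : f b = f a := by simpa [ha] using hf a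
      have hf' : f ∈ fixSpace π := by
        intro x
        rw [← hf x, Perm.mul_apply, swap_apply_def]
        split_ifs with h1 h2
        · rw [h1, hba]
        · rw [h2, hba]
        · rfl
      exact ⟨hf', by rw [hφf, hba, sub_self]⟩
    · rintro ⟨hf, h0⟩ x
      rw [hφf, sub_eq_zero] at h0
      rw [← hf x, Perm.mul_apply, swap_apply_def]
      split_ifs with h1 h2
      · rw [h1, h0]
      · rw [h2, h0]
      · rfl
  have h3 : finrank ℚ (fixSpace (swap a b * π)) = finrank ℚ (LinearMap.ker φ) := by
    rw [h2, Submodule.finrank_map_subtype_eq]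
  have := codimFix_add_finrank π
  have := codimFix_add_finrank (swap a b * π)
  omega

lemma codimFix_formPerm_cons (a : α) (l : List α) (h : (a :: l).Nodup) :
    codimFix (a :: l).formPerm = l.length := by
  induction l generalizing a with
  | nil => simp [codimFix_one]
  | cons b l ih =>
    rw [List.formPerm_cons_cons, codimFix_swap_mul, ih b (List.nodup_cons.1 h).2, List.length_cons]
    · exact List.formPerm_apply_of_notMem (List.nodup_cons.1 h).1
    · rintro rfl
      simp at h

end CayleyLength

lemma IsCycle.exists_formPerm {n : ℕ} {σ : Perm (Fin n)} (h : σ.IsCycle) :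
    ∃ l : List (Fin n), l.Nodup ∧ l.length = σ.support.card ∧ l.formPerm = σ := by
  obtain ⟨x, hx, hx'⟩ := h
  have hc : σ.cycleOf x = σ := Perm.IsCycle.cycleOf_eq ⟨x, hx, hx'⟩ hx
  exact ⟨σ.toList x, Perm.nodup_toList _ _, by rw [Perm.length_toList, hc],
    by rw [Perm.formPerm_toList, hc]⟩

/-- The bridge between the cycle count and linear algebra, checked on a single cycle and additive
over disjoint products. -/
lemma cayleyLength_eq_codimFix {n : ℕ} (σ : Perm (Fin n)) : cayleyLength σ = codimFix σ := by
  induction σ using Perm.cycle_induction_on with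
  | base_one => simp [codimFix_one, cayleyLength, cycleCount]
  | base_cycles σ h =>
    obtain ⟨l, hl, hlen, rfl⟩ := IsCycle.exists_formPerm h
    have h2 := h.two_le_card_support
    have h3 := Finset.card_le_univ l.formPerm.support
    rw [Fintype.card_fin] at h3
    have h1 : l.formPerm.cycleType.card = 1 := Perm.card_cycleType_eq_one.2 h
    cases l with
    | nil =>
      rw [List.length_nil] at hlen
      omega
    | cons a l =>
      rw [codimFix_formPerm_cons a l hl, cayleyLength, cycleCount, h1]
      rw [List.length_cons] at hlen
      omega
  | induction_disjoint σ τ hd hc ihσ ihτ =>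
    rw [codimFix_mul_of_disjoint {x | σ x ≠ x} (by simp)
      (fun x hx => (hd x).resolve_left hx), ← ihσ, ← ihτ]
    have h1 := hd.cycleType_mul
    have h2 := hd.card_support_mul
    have h3 := Finset.card_le_univ (σ * τ).support
    rw [Fintype.card_fin] at h3
    have key : ∀ π : Perm (Fin n), π.cycleType.card ≤ π.support.card := by
      intro π
      have := Multiset.card_nsmul_le_sum (s := π.cycleType) (a := 1)
        (fun x hx => (Perm.one_lt_of_mem_cycleType hx).le)
      rw [Perm.sum_cycleType] at this
      simpa using this
    have h4 := key σ
    have h5 := key τ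
    simp only [cayleyLength, cycleCount, h1, h2, Multiset.card_add]
    omega

/-! ### Geodesics to a cycle and Catalan numbers -/

section Geodesic

variable {α : Type*}

lemma formPerm_append_cons [DecidableEq α] (u : List α) (j : α) (w : List α) :
    (u ++ j :: w).formPerm = (u ++ [j]).formPerm * (j :: w).formPerm := by
  induction u with
  | nil => simp
  | cons x u ih =>
    cases u with
    | nil => simp
    | cons y u =>
      simp only [List.cons_append, List.formPerm_cons_cons] at ih ⊢
      rw [ih, mul_assoc]

/-- Multiplying the cycle through `a, …, j, …` by the transposition of `a` and `j` cuts it in two,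
just before `j`. -/
lemma swap_mul_formPerm [DecidableEq α] (a : α) (u : List α) (j : α) (w : List α)
    (h : (a :: u ++ j :: w).Nodup) :
    swap a j * (a :: u ++ j :: w).formPerm = (a :: u).formPerm * (j :: w).formPerm := by
  have hnd : (j :: a :: u).Nodup := by
    have h1 : (a :: u ++ [j]).Nodup := h.sublist (by simp)
    have h2 : (j :: a :: u).Perm (a :: u ++ [j]) := by
      simpa using (List.perm_append_singleton j (a :: u)).symm
    exact h2.nodup_iff.2 h1
  have hrot : (a :: u ++ [j]).formPerm = (j :: a :: u).formPerm := by
    rw [← List.formPerm_rotate_one _ hnd]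
    simp
  rw [formPerm_append_cons, hrot, List.formPerm_cons_cons, swap_comm j a, ← mul_assoc,
    ← mul_assoc, swap_mul_self, one_mul]

/-- A permutation preserving `S` splits into a part moving only points of `S` and a part moving
only points outside `S`. -/
lemma exists_split (S : Set α) {ρ : Perm α} (h : ∀ x, ρ x ∈ S ↔ x ∈ S) :
    ∃ ρ₁ ρ₂ : Perm α, ρ = ρ₁ * ρ₂ ∧ (∀ x ∉ S, ρ₁ x = x) ∧ ∀ x ∈ S, ρ₂ x = x := by
  classical
  have h₁ : ∀ x ∉ S, Perm.ofSubtype (ρ.subtypePerm h) x = x :=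
    fun x hx => Perm.ofSubtype_apply_of_not_mem _ hx
  have h₂ : ∀ x ∈ S, Perm.ofSubtype (ρ.subtypePerm h) x = ρ x := by
    intro x hx
    rw [Perm.ofSubtype_apply_of_mem _ hx]
    rfl
  refine ⟨Perm.ofSubtype (ρ.subtypePerm h), (Perm.ofSubtype (ρ.subtypePerm h))⁻¹ * ρ,
    by simp, h₁, ?_⟩
  intro x hx
  rw [Perm.mul_apply, ← h₂ x hx, ← Perm.mul_apply, inv_mul_cancel, Perm.one_apply]

variable [Fintype α]

/-- The permutations lying on a geodesic from the identity to `γ` in the Cayley metric. -/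
def geodesicSet (γ : Perm α) : Set (Perm α) :=
  {σ | codimFix σ + codimFix (σ⁻¹ * γ) = codimFix γ}

lemma codimFix_le_add (σ γ : Perm α) : codimFix γ ≤ codimFix σ + codimFix (σ⁻¹ * γ) := by
  simpa using codimFix_mul_le σ (σ⁻¹ * γ)

/-- A permutation on a geodesic to `γ` preserves every `γ`-invariant set. -/
lemma mem_iff_of_mem_geodesicSet {γ σ : Perm α} (hσ : σ ∈ geodesicSet γ) (S : Set α)
    (hS : ∀ x, γ x ∈ S ↔ x ∈ S) (x : α) : σ x ∈ S ↔ x ∈ S := by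
  classical
  have h : codimFix σ + codimFix (σ⁻¹ * γ) = codimFix (σ * (σ⁻¹ * γ)) := by
    rw [mul_inv_cancel_left]
    exact hσ
  have hle := fixSpace_mul_le_of_codimFix_add h
  rw [mul_inv_cancel_left] at hle
  have hmem : (fun x => if x ∈ S then (1 : ℚ) else 0) ∈ fixSpace γ := by
    intro x
    simp [hS]
  have := mem_fixSpace.1 (hle hmem) x
  by_cases h1 : σ x ∈ S <;> by_cases h2 : x ∈ S <;> simp_all

lemma geodesicSet_one : geodesicSet (1 : Perm α) = {1} := by
  ext σ
  constructor
  · intro h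
    ext x
    have := mem_iff_of_mem_geodesicSet h {x} (by simp) x
    simpa using this
  · rintro rfl
    simp [geodesicSet, codimFix_one]

/-- For `P` and `Q` with disjoint supports, the geodesics to `P * Q` are products of geodesics
to `P` and to `Q`. -/
lemma geodesicSet_mul_subset (S : Set α) {P Q : Perm α} (hP : ∀ x ∉ S, P x = x)
    (hQ : ∀ x ∈ S, Q x = x) :
    geodesicSet (P * Q) ⊆ Set.image2 (· * ·) (geodesicSet P) (geodesicSet Q) := by
  have hPS : ∀ x, P x ∈ S ↔ x ∈ S := by
    intro x
    by_cases hx : x ∈ S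
    · simp only [hx, iff_true]
      by_contra h
      exact h (by rwa [P.injective (hP _ h)])
    · rw [hP x hx]
  have hQS : ∀ x, Q x ∈ S ↔ x ∈ S := by
    intro x
    by_cases hx : x ∈ S
    · rw [hQ x hx]
    · simp only [hx, iff_false]
      intro h
      exact hx (by rwa [Q.injective (hQ _ h)] at h)
  intro ρ hρ
  have hρS := mem_iff_of_mem_geodesicSet hρ S (fun x => by rw [Perm.mul_apply, hPS, hQS])
  obtain ⟨ρ₁, ρ₂, rfl, h₁, h₂⟩ := exists_split S hρS
  have h₁' : ∀ x ∉ S, ρ₁⁻¹ x = x := fun x hx => by rw [Perm.inv_eq_iff_eq, h₁ x hx]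
  have h₂' : ∀ x ∈ S, ρ₂⁻¹ x = x := fun x hx => by rw [Perm.inv_eq_iff_eq, h₂ x hx]
  have h₁P : ∀ x ∉ S, (ρ₁⁻¹ * P) x = x := fun x hx => by rw [Perm.mul_apply, hP x hx, h₁' x hx]
  have h₂Q : ∀ x ∈ S, (ρ₂⁻¹ * Q) x = x := fun x hx => by rw [Perm.mul_apply, hQ x hx, h₂' x hx]
  have hsplit : (ρ₁ * ρ₂)⁻¹ * (P * Q) = (ρ₁⁻¹ * P) * (ρ₂⁻¹ * Q) := by
    -- permutations with disjoint supports commute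
    have hd : Perm.Disjoint (ρ₁⁻¹ * P) ρ₂⁻¹ := by
      intro x
      by_cases hx : x ∈ S
      · exact Or.inr (h₂' x hx)
      · exact Or.inl (h₁P x hx)
    have hcomm := hd.commute.eq
    calc (ρ₁ * ρ₂)⁻¹ * (P * Q) = ρ₂⁻¹ * (ρ₁⁻¹ * P) * Q := by group
      _ = (ρ₁⁻¹ * P) * (ρ₂⁻¹ * Q) := by rw [← hcomm, mul_assoc]
  have hρ' : codimFix (ρ₁ * ρ₂) + codimFix ((ρ₁ * ρ₂)⁻¹ * (P * Q)) = codimFix (P * Q) := hρ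
  rw [hsplit, codimFix_mul_of_disjoint S h₁ h₂, codimFix_mul_of_disjoint S h₁P h₂Q,
    codimFix_mul_of_disjoint S hP hQ] at hρ'
  have h3 := codimFix_le_add ρ₁ P
  have h4 := codimFix_le_add ρ₂ Q
  refine ⟨ρ₁, ?_, ρ₂, ?_, rfl⟩
  · change codimFix ρ₁ + codimFix (ρ₁⁻¹ * P) = codimFix P
    omega
  · change codimFix ρ₂ + codimFix (ρ₂⁻¹ * Q) = codimFix Q
    omega

lemma ncard_geodesicSet_mul_le (S : Set α) {P Q : Perm α} (hP : ∀ x ∉ S, P x = x)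
    (hQ : ∀ x ∈ S, Q x = x) :
    (geodesicSet (P * Q)).ncard ≤ (geodesicSet P).ncard * (geodesicSet Q).ncard := by
  refine (Set.ncard_le_ncard (geodesicSet_mul_subset S hP hQ) (Set.toFinite _)).trans ?_
  rw [← Set.image_prod, ← Set.ncard_prod]
  exact Set.ncard_image_le (Set.toFinite _)

variable [DecidableEq α]

/-- If `ρ` fixes `j` and lies on a geodesic to `swap j c * γ`, where `γ` fixes `j` as well, then
`ρ` lies on a geodesic to `γ`: the point `j` can be removed. -/
lemma mem_geodesicSet_of_swap_mul {ρ γ : Perm α} {j c : α} (hρj : ρ j = j) (hγj : γ j = j)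
    (hρ : ρ ∈ geodesicSet (swap j c * γ)) : ρ ∈ geodesicSet γ := by
  rcases eq_or_ne j c with rfl | hjc
  · rwa [swap_self, ← Perm.one_def, one_mul] at hρ
  have hρj' : ρ⁻¹ j = j := by rw [Perm.inv_eq_iff_eq, hρj]
  have h1 := codimFix_swap_mul hγj hjc
  have h2 : codimFix (ρ⁻¹ * (swap j c * γ)) = codimFix (ρ⁻¹ * γ) + 1 := by
    rw [← mul_assoc, mul_swap_eq_swap_mul, mul_assoc, hρj', codimFix_swap_mul]
    · rw [Perm.mul_apply, hγj, hρj']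
    · intro h
      exact hjc (ρ⁻¹.injective (hρj'.trans h))
  have h3 : codimFix ρ + codimFix (ρ⁻¹ * (swap j c * γ)) = codimFix (swap j c * γ) := hρ
  change codimFix ρ + codimFix (ρ⁻¹ * γ) = codimFix γ
  omega

/-- If `σ` sends `j` to the head of the list `u ++ j :: w` and lies on a geodesic to the cycle of
this list, then undoing this step leaves a permutation on a geodesic to the product of the two
disjoint cycles of `u` and `w`. For `u = []` the head is `j` itself, and the transposition is
trivial. -/
lemma swap_mul_mem_geodesicSet {a j : α} {l u w : List α} {σ : Perm α} (hl : (a :: l).Nodup)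
    (hdec : a :: l = u ++ j :: w) (hσj : σ j = a) (hσ : σ ∈ geodesicSet (a :: l).formPerm) :
    swap a j * σ ∈ geodesicSet (u.formPerm * w.formPerm) := by
  have hnd := hl
  rw [hdec] at hnd
  have hju : j ∉ u := by
    intro h
    exact (List.nodup_append.1 hnd).2.2 j h j (by simp) rfl
  have hjw : j ∉ w := (List.nodup_cons.1 (List.nodup_append.1 hnd).2.1).1
  have hfix : (u.formPerm * w.formPerm) j = j := by
    rw [Perm.mul_apply, List.formPerm_apply_of_notMem hjw, List.formPerm_apply_of_notMem hju]
  have hρj : (swap a j * σ) j = j := by rw [Perm.mul_apply, hσj, swap_apply_left]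
  -- first cut the cycle just before `j`
  have hcut : swap a j * σ ∈ geodesicSet (u.formPerm * (j :: w).formPerm) := by
    cases u with
    | nil =>
      obtain ⟨rfl, rfl⟩ : a = j ∧ l = w := by simpa using hdec
      rwa [swap_self, ← Perm.one_def, one_mul, List.formPerm_nil, one_mul]
    | cons b u =>
      obtain ⟨rfl, rfl⟩ : a = b ∧ l = u ++ j :: w := by simpa using hdec
      have haj : a ≠ j := fun h => hju (by simp [h])
      have h1 : codimFix σ = codimFix (swap a j * σ) + 1 := by
        have := codimFix_swap_mul hρj haj.symm
        rwa [swap_comm j a, ← mul_assoc, swap_mul_self, one_mul] at this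
      have h2 : codimFix σ + codimFix (σ⁻¹ * (a :: (u ++ j :: w)).formPerm) =
        codimFix (a :: (u ++ j :: w)).formPerm := hσ
      have h3 := codimFix_formPerm_cons _ _ hl
      have h4 := codimFix_formPerm_cons a u (List.nodup_append.1 hnd).1
      have h5 := codimFix_formPerm_cons j w (List.nodup_append.1 hnd).2.1
      have h6 : codimFix ((a :: u).formPerm * (j :: w).formPerm) = _ :=
        codimFix_mul_of_disjoint {x | x ∈ a :: u}
          (fun x hx => List.formPerm_apply_of_notMem hx)
          (fun x hx => List.formPerm_apply_of_notMem
            fun hx' => (List.nodup_append.1 hnd).2.2 x hx x hx' rfl)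
      have h8 : (swap a j * σ)⁻¹ * ((a :: u).formPerm * (j :: w).formPerm) =
          σ⁻¹ * (a :: (u ++ j :: w)).formPerm := by
        rw [← swap_mul_formPerm a u j w hnd, mul_inv_rev, swap_inv, List.cons_append, mul_assoc,
          ← mul_assoc (swap a j) (swap a j), swap_mul_self, one_mul]
      change codimFix (swap a j * σ) + codimFix ((swap a j * σ)⁻¹ * _) = _
      rw [h8]
      rw [List.length_append, List.length_cons] at h3
      omega
  -- then drop the fixed point `j` from the second cycle
  cases w with
  | nil => simpa using hcut
  | cons b w =>
    rw [List.formPerm_cons_cons, ← mul_assoc, mul_swap_eq_swap_mul, mul_assoc,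
      List.formPerm_apply_of_notMem hju] at hcut
    exact mem_geodesicSet_of_swap_mul hρj hfix hcut

/-- There are at most `catalan k` permutations on geodesics to a `k`-cycle (in fact exactly that
many: these are the noncrossing partitions). -/
lemma ncard_geodesicSet_formPerm_le (k : ℕ) (l : List α) (hl : l.Nodup) (hk : l.length = k) :
    (geodesicSet l.formPerm).ncard ≤ catalan k := by
  induction k using Nat.strong_induction_on generalizing l with
  | _ k ih =>
    cases l with
    | nil =>
      obtain rfl : k = 0 := by simpa using hk.symm
      simp [geodesicSet_one]
    | cons a l =>
      obtain rfl : k = l.length + 1 := by simpa using hk.symm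
      let L := a :: l
      have hsub : geodesicSet L.formPerm ⊆ ⋃ i ∈ (Finset.univ : Finset (Fin (l.length + 1))),
          (fun ρ => swap a (L.get i) * ρ) ''
            geodesicSet ((L.take i).formPerm * (L.drop (i + 1)).formPerm) := by
        intro σ hσ
        have hj : σ⁻¹ a ∈ L := by
          have := mem_iff_of_mem_geodesicSet hσ {x | x ∈ L}
            (fun x => List.formPerm_mem_iff_mem) (σ⁻¹ a)
          rw [← Perm.mul_apply, mul_inv_cancel, Perm.one_apply] at this
          exact this.1 (by simp [L])
        obtain ⟨i, hi⟩ := List.get_of_mem hj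
        have hdec : a :: l = L.take i ++ L.get i :: L.drop (i + 1) := by
          rw [List.get_eq_getElem, List.getElem_cons_drop, List.take_append_drop]
        refine Set.mem_iUnion₂.2 ⟨i, Finset.mem_univ _, swap a (L.get i) * σ, ?_, ?_⟩
        · exact swap_mul_mem_geodesicSet hl hdec (by rw [hi, ← Perm.mul_apply, mul_inv_cancel, Perm.one_apply]) hσ
        · simp
      calc (geodesicSet L.formPerm).ncard
          ≤ _ := Set.ncard_le_ncard hsub (Set.toFinite _)
        _ ≤ _ := Finset.set_ncard_biUnion_le _ _
        _ ≤ ∑ i : Fin (l.length + 1), catalan i * catalan (l.length - i) := by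
          refine Finset.sum_le_sum fun i _ => ?_
          refine (Set.ncard_image_le (Set.toFinite _)).trans ?_
          have hLlen : L.length = l.length + 1 := rfl
          have hdisj : ∀ x ∈ L.take i, x ∉ L.drop (i + 1) := by
            intro x hx hx'
            exact List.disjoint_take_drop hl (Nat.le_succ _) hx hx'
          refine (ncard_geodesicSet_mul_le {x | x ∈ L.take i}
            (fun x hx => List.formPerm_apply_of_notMem hx)
            (fun x hx => List.formPerm_apply_of_notMem (hdisj x hx))).trans ?_
          have hi := i.2
          refine Nat.mul_le_mul (ih _ i.2 _ (hl.sublist (List.take_sublist _ _)) ?_)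
            (ih _ (by omega) _ (hl.sublist (List.drop_sublist _ _)) ?_)
          · rw [List.length_take, hLlen]
            omega
          · rw [List.length_drop, hLlen]
            omega
        _ = catalan (l.length + 1) := (catalan_succ _).symm

end Geodesic

/-! ### Minimizing labelings -/

section Minimizers

variable {n : ℕ}

lemma cayleyDist_triangle (σ τ π : Perm (Fin n)) :
    cayleyDist σ π ≤ cayleyDist σ τ + cayleyDist τ π := by
  simp only [cayleyDist, cayleyLength_eq_codimFix]
  have := codimFix_mul_le (σ⁻¹ * τ) (τ⁻¹ * π)
  rwa [show σ⁻¹ * τ * (τ⁻¹ * π) = σ⁻¹ * π by group] at this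

lemma cayleyDist_self (σ : Perm (Fin n)) : cayleyDist σ σ = 0 := by
  simp [cayleyDist, cayleyLength_eq_codimFix, codimFix_one]

lemma hamiltonian_eq_sum {V : Type*} [Fintype V] (G : SimpleGraph V) [Fintype G.edgeSet]
    (α : V → Perm (Fin n)) : hamiltonian G α = ∑ e ∈ G.edgeFinset, edgeTerm α e := by
  rw [hamiltonian, ← finsum_mem_coe_finset, SimpleGraph.coe_edgeFinset]

/-- The labeling equal to `1` below the threshold `k` of the potential `φ` and to `γ` elsewhere. -/
noncomputable def cutLabeling {V : Type*} (γ : Perm (Fin n)) (φ : V → ℤ) (k : ℤ) :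
    V → Perm (Fin n) :=
  fun x => if φ x < k then 1 else γ

/-- Summed over any finite set of thresholds, an edge is cut at most `|φ x - φ y|` times, each cut
costing `d(1, γ)`. -/
lemma sum_cutLabeling_le {V : Type*} (γ : Perm (Fin n)) (φ : V → ℤ) (K : Finset ℤ) (x y : V) :
    ∑ k ∈ K, edgeTerm (cutLabeling γ φ k) s(x, y) ≤ cayleyDist 1 γ * (φ x - φ y).natAbs := by
  wlog hxy : φ x ≤ φ y generalizing x y
  · have := this y x (le_of_not_ge hxy)
    rwa [Sym2.eq_swap, ← Int.natAbs_neg, neg_sub] at this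
  have hterm : ∀ k, edgeTerm (cutLabeling γ φ k) s(x, y) =
      if k ∈ Finset.Ioc (φ x) (φ y) then cayleyDist 1 γ else 0 := by
    intro k
    simp only [edgeTerm, Sym2.lift_mk, cutLabeling, Finset.mem_Ioc]
    by_cases h1 : φ x < k <;> by_cases h2 : φ y < k
    · simp [h1, h2, cayleyDist_self]
    · simp [h1, h2, not_lt.1 h2]
    · omega
    · simp [h1, h2, cayleyDist_self]
  rw [Finset.sum_congr rfl fun k _ => hterm k, Finset.sum_ite_mem, Finset.sum_const, smul_eq_mul,
    mul_comm]
  refine Nat.mul_le_mul_left _ ((Finset.card_le_card Finset.inter_subset_right).trans ?_)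
  rw [Int.card_Ioc]
  omega

/-- In a minimizing labeling the potential `φ = d(1, α ·) - d(α ·, γ)` changes by twice the
distance of the labels along every edge. -/
lemma natAbs_potential_sub {V : Type*} [Fintype V] {G : SimpleGraph V} {s t : V}
    {γ : Perm (Fin n)} (hpos : 0 < cayleyDist 1 γ) {α : V → Perm (Fin n)} (hs : α s = 1) (ht : α t = γ)
    (hmin : ∀ β : V → Perm (Fin n), β s = 1 → β t = γ → hamiltonian G α ≤ hamiltonian G β)
    {x y : V} (hxy : G.Adj x y) :
    (((cayleyDist 1 (α x) : ℤ) - cayleyDist (α x) γ) -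
      (cayleyDist 1 (α y) - cayleyDist (α y) γ)).natAbs = 2 * cayleyDist (α x) (α y) := by
  classical
  set N := cayleyDist 1 γ with hN
  let φ : V → ℤ := fun x => (cayleyDist 1 (α x) : ℤ) - cayleyDist (α x) γ
  have hφs : φ s = -N := by simp [φ, hs, cayleyDist_self, hN]
  have hφt : φ t = N := by simp [φ, ht, cayleyDist_self, hN]
  have hlip : ∀ x y, (φ x - φ y).natAbs ≤ 2 * cayleyDist (α x) (α y) := by
    intro x y
    have h1 := cayleyDist_triangle 1 (α x) (α y)
    have h2 := cayleyDist_triangle 1 (α y) (α x)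
    have h3 := cayleyDist_triangle (α x) (α y) γ
    have h4 := cayleyDist_triangle (α y) (α x) γ
    have h5 := cayleyDist_comm (α x) (α y)
    simp only [φ]
    omega
  let D : Sym2 V → ℕ := Sym2.lift ⟨fun x y => (φ x - φ y).natAbs,
    fun x y => by beta_reduce; omega⟩
  let K : Finset ℤ := Finset.Ioc (-N) N
  have hK : K.card = 2 * N := by
    simp only [K, Int.card_Ioc]
    omega
  -- each edge is cut at most as often as `D` allows, and `D` is at most twice the edge term
  have hle1 : ∀ e ∈ G.edgeFinset, ∑ k ∈ K, edgeTerm (cutLabeling γ φ k) e ≤ N * D e := by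
    intro e _
    induction e with
    | _ x y => exact sum_cutLabeling_le γ φ K x y
  have hle2 : ∀ e ∈ G.edgeFinset, N * D e ≤ N * (2 * edgeTerm α e) := by
    intro e _
    induction e with
    | _ x y => exact Nat.mul_le_mul_left _ (hlip x y)
  have hlow : ∑ e ∈ G.edgeFinset, N * (2 * edgeTerm α e) ≤ ∑ e ∈ G.edgeFinset, N * D e := by
    calc ∑ e ∈ G.edgeFinset, N * (2 * edgeTerm α e)
        = ∑ _k ∈ K, hamiltonian G α := by
          rw [Finset.sum_const, hK, smul_eq_mul, hamiltonian_eq_sum, Finset.mul_sum]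
          exact Finset.sum_congr rfl fun e _ => by ring
      _ ≤ ∑ k ∈ K, hamiltonian G (cutLabeling γ φ k) := by
          refine Finset.sum_le_sum fun k hk => hmin _ ?_ ?_
          · have := (Finset.mem_Ioc.1 hk).1
            simp [cutLabeling, hφs, this]
          · have := (Finset.mem_Ioc.1 hk).2
            simp [cutLabeling, hφt, not_lt.2 this]
      _ = ∑ e ∈ G.edgeFinset, ∑ k ∈ K, edgeTerm (cutLabeling γ φ k) e := by
          rw [Finset.sum_comm]
          exact Finset.sum_congr rfl fun k _ => hamiltonian_eq_sum G _
      _ ≤ _ := Finset.sum_le_sum hle1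
  have heq := (Finset.sum_eq_sum_iff_of_le hle2).1 (le_antisymm (Finset.sum_le_sum hle2) hlow)
  have := heq s(x, y) (by simpa using hxy)
  exact Nat.eq_of_mul_eq_mul_left hpos this

/-- Every label of a minimizing labeling lies on a geodesic from `1` to `γ`. -/
lemma mem_geodesicSet_of_minimizer {V : Type*} [Fintype V] {G : SimpleGraph V}
    (hconn : G.Connected) {s t : V} {γ : Perm (Fin n)} (hpos : 0 < cayleyDist 1 γ) {α : V → Perm (Fin n)}
    (hs : α s = 1) (ht : α t = γ)
    (hmin : ∀ β : V → Perm (Fin n), β s = 1 → β t = γ → hamiltonian G α ≤ hamiltonian G β)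
    (x : V) : α x ∈ geodesicSet γ := by
  have hstep : ∀ x y, G.Adj x y →
      cayleyDist 1 (α x) + cayleyDist (α x) γ = cayleyDist 1 (α y) + cayleyDist (α y) γ := by
    intro x y hxy
    have h0 := natAbs_potential_sub hpos hs ht hmin hxy
    have h1 := cayleyDist_triangle 1 (α x) (α y)
    have h2 := cayleyDist_triangle 1 (α y) (α x)
    have h3 := cayleyDist_triangle (α x) (α y) γ
    have h4 := cayleyDist_triangle (α y) (α x) γ
    have h5 := cayleyDist_comm (α x) (α y)
    omega
  have hconst : cayleyDist 1 (α x) + cayleyDist (α x) γ = cayleyDist 1 γ := by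
    obtain ⟨p⟩ := hconn.preconnected x s
    clear hmin
    induction p with
    | nil => simp [hs, cayleyDist_self]
    | cons h _ ih => exact (hstep _ _ h).trans (ih hs)
  simpa [geodesicSet, cayleyDist, cayleyLength_eq_codimFix] using hconst

/-- A permutation with a single cycle (fixed points included) is the cycle of a list enumerating
all `n` points. -/
lemma exists_formPerm_of_cycleCount (γ : Perm (Fin n)) (hn : 1 ≤ n) (hγ : cycleCount γ = 1) :
    ∃ l : List (Fin n), l.Nodup ∧ l.length = n ∧ l.formPerm = γ := by
  have hle := Finset.card_le_univ γ.support
  rw [Fintype.card_fin] at hle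
  unfold cycleCount at hγ
  by_cases h1 : γ = 1
  · subst h1
    simp only [Perm.cycleType_one, Multiset.card_zero, Perm.support_one, Finset.card_empty] at hγ
    exact ⟨[⟨0, hn⟩], by simp, by simp; omega, by simp⟩
  · have h2 : γ.cycleType.card ≠ 0 := by simpa using h1
    obtain ⟨l, hl, hlen, h⟩ := IsCycle.exists_formPerm
      (Perm.card_cycleType_eq_one.1 (by omega : γ.cycleType.card = 1))
    exact ⟨l, hl, by omega, h⟩

end Minimizers

end

/-- The number of labelings of a connected network attaining the minimum of the Hamiltonian
`H_G^{(n)}` is at most `(Cat_n)^{|V|}`, where `Cat_n` is the `n`-th Catalan number. -/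
theorem minimizer_count_le_catalan_pow {V : Type*} [Fintype V] (G : SimpleGraph V)
    (hconn : G.Connected) (s t : V) (hst : s ≠ t) (n : ℕ) (hn : 1 ≤ n)
    (γ : Equiv.Perm (Fin n)) (hγ : cycleCount γ = 1) :
    {α : V → Equiv.Perm (Fin n) | α s = 1 ∧ α t = γ ∧
      ∀ β : V → Equiv.Perm (Fin n), β s = 1 → β t = γ →
        hamiltonian G α ≤ hamiltonian G β}.ncard
      ≤ catalan n ^ Fintype.card V := by
  classical
  obtain ⟨l, hl, hlen, hlγ⟩ := exists_formPerm_of_cycleCount γ hn hγ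
  have hcard : (geodesicSet γ).ncard ≤ catalan n := by
    rw [← hlγ]
    exact ncard_geodesicSet_formPerm_le n l hl hlen
  have hmem : ∀ α : V → Equiv.Perm (Fin n), α s = 1 → α t = γ →
      (∀ β : V → Equiv.Perm (Fin n), β s = 1 → β t = γ → hamiltonian G α ≤ hamiltonian G β) →
      ∀ x, α x ∈ geodesicSet γ := by
    intro α hs ht hmin x
    by_cases h1 : n = 1
    · subst h1
      rw [Subsingleton.elim γ 1, geodesicSet_one]
      exact Subsingleton.elim _ _
    · have hpos : 0 < cayleyDist 1 γ := by
        rw [cayleyDist, inv_one, one_mul, cayleyLength, hγ]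
        omega
      exact mem_geodesicSet_of_minimizer hconn hpos hs ht hmin x
  refine (Set.ncard_le_ncard (t := ↑(Fintype.piFinset fun _ : V => (geodesicSet γ).toFinset))
    ?_ (Set.toFinite _)).trans ?_
  · rintro α ⟨hs, ht, hmin⟩
    simpa using hmem α hs ht hmin
  · rw [Set.ncard_coe_finset, Fintype.card_piFinset, Finset.prod_const,
      Finset.card_univ, ← Set.ncard_eq_toFinset_card']
    exact Nat.pow_le_pow_left hcard _
end

section
/- Let G₁ = (V₁, E₁) and G₂ = (V₂, E₂) be networks with the same source s and sink t, with V₁ ∩ V₂ = {s, t} and E₁ ∩ E₂ = ∅, and let G = (V₁ ∪ V₂, E₁ ⊔ E₂) be their parallel composition (again with source s and sink t). Then for every n ≥ 1: (i) the minimum of H_G^{(n)} over labelings of G equals the minimum of H_{G₁}^{(n)} plus the minimum of H_{G₂}^{(n)}; (ii) maxflow(G) = maxflow(G₁) + maxflow(G₂); and (iii) the number of labelings of G attaining the minimum of H_G^{(n)} equals the product of the number of minimizing labelings of G₁ and of G₂. -/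
/-! ### Hamiltonians and gluing -/

lemma hamiltonian_sup {V : Type*} [Fintype V] (G₁ G₂ : SimpleGraph V)
    (hdisj : ∀ x y, ¬(G₁.Adj x y ∧ G₂.Adj x y)) {n : ℕ} (α : V → Equiv.Perm (Fin n)) :
    hamiltonian (G₁ ⊔ G₂) α = hamiltonian G₁ α + hamiltonian G₂ α := by
  unfold hamiltonian
  rw [SimpleGraph.edgeSet_sup]
  refine finsum_mem_union ?_ (Set.toFinite _) (Set.toFinite _)
  rw [Set.disjoint_left]
  intro e
  induction e with
  | h x y => exact fun h1 h2 => hdisj x y ⟨h1, h2⟩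

lemma hamiltonian_congr {V : Type*} (G : SimpleGraph V) (W : Set V)
    (hG : ∀ x y, G.Adj x y → x ∈ W ∧ y ∈ W) {n : ℕ} {α β : V → Equiv.Perm (Fin n)}
    (h : ∀ x ∈ W, α x = β x) : hamiltonian G α = hamiltonian G β := by
  unfold hamiltonian
  refine finsum_mem_congr rfl ?_
  intro e
  induction e with
  | h x y =>
    intro he
    have := hG x y he
    simp only [edgeTerm, Sym2.lift_mk, h x this.1, h y this.2]

open Classical in
/-- The labeling that agrees with `α` on `W` and with `β` off `W`. -/
noncomputable def glue {V P : Type*} (W : Set V) (α β : V → P) : V → P :=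
  fun x => if x ∈ W then α x else β x

lemma glue_of_mem {V P : Type*} {W : Set V} (α β : V → P) {x : V} (hx : x ∈ W) :
    glue W α β x = α x := if_pos hx

lemma glue_of_notMem {V P : Type*} {W : Set V} (α β : V → P) {x : V} (hx : x ∉ W) :
    glue W α β x = β x := if_neg hx

/-- On the second part the glued labeling is `β`, as the overlap `{s, t}` carries equal labels. -/
lemma glue_eq_right {V P : Type*} {V₁ V₂ : Set V} {s t : V} (hI : V₁ ∩ V₂ = {s, t})
    {α β : V → P} (hs : α s = β s) (ht : α t = β t) {x : V} (hx : x ∈ V₂) :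
    glue V₁ α β x = β x := by
  by_cases h1 : x ∈ V₁
  · rw [glue_of_mem _ _ h1]
    have : x ∈ ({s, t} : Set V) := hI ▸ ⟨h1, hx⟩
    rcases this with rfl | rfl
    · exact hs
    · exact ht
  · exact glue_of_notMem _ _ h1

/-! ### Edge-disjoint paths -/

/-- A family of pairwise edge-disjoint paths picks out distinct first edges, so the set defining
`maxflow` is bounded; this is where `s ≠ t` matters. -/
lemma flow_bddAbove {V : Type*} [Fintype V] (G : SimpleGraph V) {s t : V} (hst : s ≠ t) :
    BddAbove {k | ∃ π : Fin k → G.Walk s t, (∀ i, (π i).IsPath) ∧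
      ∀ i j, i ≠ j → List.Disjoint (π i).edges (π j).edges} := by
  classical
  refine ⟨Fintype.card (Sym2 V), ?_⟩
  rintro k ⟨π, -, hd⟩
  have hne : ∀ i, ∃ e, e ∈ (π i).edges := by
    intro i
    cases π i with
    | nil => exact absurd rfl hst
    | cons h p => exact ⟨_, List.mem_cons_self⟩
  choose f hf using hne
  have hinj : Function.Injective f := by
    intro i j hij
    by_contra hne
    exact hd i j hne (hf i) (hij ▸ hf j)
  simpa using Fintype.card_le_of_injective f hinj

lemma card_le_maxflow {V : Type*} [Fintype V] (G : SimpleGraph V) {s t : V} (hst : s ≠ t)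
    {ι : Type*} [Fintype ι] (π : ι → G.Walk s t) (hp : ∀ i, (π i).IsPath)
    (hd : ∀ i j, i ≠ j → List.Disjoint (π i).edges (π j).edges) :
    Fintype.card ι ≤ maxflow G s t := by
  refine le_csSup (flow_bddAbove G hst) ?_
  refine ⟨fun i => π ((Fintype.equivFin ι).symm i), fun i => hp _, fun i j hij => hd _ _ ?_⟩
  simpa using hij

lemma exists_maxflow {V : Type*} [Fintype V] (G : SimpleGraph V) {s t : V} (hst : s ≠ t) :
    ∃ π : Fin (maxflow G s t) → G.Walk s t, (∀ i, (π i).IsPath) ∧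
      ∀ i j, i ≠ j → List.Disjoint (π i).edges (π j).edges :=
  Nat.sSup_mem (s := {k | ∃ π : Fin k → G.Walk s t, (∀ i, (π i).IsPath) ∧
      ∀ i j, i ≠ j → List.Disjoint (π i).edges (π j).edges})
    ⟨0, fun i => i.elim0, fun i => i.elim0, fun i => i.elim0⟩ (flow_bddAbove G hst)

/-- A path to `t` avoiding `s` that starts in `W` never leaves `K`, provided every edge of `H` at a
vertex of `W` other than `s` and `t` is an edge of `K` with its other end in `W`. -/
lemma path_stays {V : Type*} {H K : SimpleGraph V} {W : Set V} {s t : V}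
    (hH : ∀ u v, H.Adj u v → u ∈ W → u ≠ s → u ≠ t → K.Adj u v ∧ v ∈ W) :
    ∀ {u : V} (p : H.Walk u t), p.IsPath → s ∉ p.support → u ∈ W →
      ∀ e ∈ p.edges, e ∈ K.edgeSet := by
  intro u p
  induction p with
  | nil => intro _ _ _ e he; simp at he
  | @cons u v w h p ih =>
    intro hp hs hu e he
    rw [SimpleGraph.Walk.cons_isPath_iff] at hp
    rw [SimpleGraph.Walk.support_cons, List.mem_cons, not_or] at hs
    have hut : u ≠ w := fun h => hp.2 (h ▸ p.end_mem_support)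
    obtain ⟨ha, hv⟩ := hH u v h hu (Ne.symm hs.1) hut
    rw [SimpleGraph.Walk.edges_cons, List.mem_cons] at he
    rcases he with rfl | he
    · exact ha
    · exact ih hH hp.1 hs.2 hv e he

lemma path_in_part {V : Type*} {G₁ G₂ : SimpleGraph V} {V₁ V₂ : Set V} {s t : V} (hst : s ≠ t)
    (hI : V₁ ∩ V₂ = {s, t})
    (hG₁ : ∀ x y, G₁.Adj x y → x ∈ V₁ ∧ y ∈ V₁)
    (hG₂ : ∀ x y, G₂.Adj x y → x ∈ V₂ ∧ y ∈ V₂)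
    (p : (G₁ ⊔ G₂).Walk s t) (hp : p.IsPath) :
    (∀ e ∈ p.edges, e ∈ G₁.edgeSet) ∨ (∀ e ∈ p.edges, e ∈ G₂.edgeSet) := by
  have hov : ∀ u, u ∈ V₁ → u ∈ V₂ → u ≠ s → u ≠ t → False := by
    intro u h1 h2 h3 h4
    have : u ∈ ({s, t} : Set V) := hI ▸ ⟨h1, h2⟩
    rcases this with h | h
    · exact h3 h
    · exact h4 h
  cases p with
  | nil => exact absurd rfl hst
  | @cons _ v _ h p =>
    rw [SimpleGraph.Walk.cons_isPath_iff] at hp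
    rcases h with h | h
    · left
      intro e he
      rw [SimpleGraph.Walk.edges_cons, List.mem_cons] at he
      rcases he with rfl | he
      · exact h
      · refine path_stays (W := V₁) (s := s) ?_ p hp.1 hp.2 (hG₁ _ _ h).2 e he
        rintro a b (hab | hab) ha has hat
        · exact ⟨hab, (hG₁ _ _ hab).2⟩
        · exact (hov a ha (hG₂ _ _ hab).1 has hat).elim
    · right
      intro e he
      rw [SimpleGraph.Walk.edges_cons, List.mem_cons] at he
      rcases he with rfl | he
      · exact h
      · refine path_stays (W := V₂) (s := s) ?_ p hp.1 hp.2 (hG₂ _ _ h).2 e he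
        rintro a b (hab | hab) ha has hat
        · exact (hov a (hG₁ _ _ hab).1 ha has hat).elim
        · exact ⟨hab, (hG₂ _ _ hab).2⟩

lemma maxflow_sup {V : Type*} [Fintype V] {G₁ G₂ : SimpleGraph V} {V₁ V₂ : Set V} {s t : V}
    (hst : s ≠ t) (hI : V₁ ∩ V₂ = {s, t})
    (hG₁ : ∀ x y, G₁.Adj x y → x ∈ V₁ ∧ y ∈ V₁)
    (hG₂ : ∀ x y, G₂.Adj x y → x ∈ V₂ ∧ y ∈ V₂)
    (hdisj : ∀ x y, ¬(G₁.Adj x y ∧ G₂.Adj x y)) :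
    maxflow (G₁ ⊔ G₂) s t = maxflow G₁ s t + maxflow G₂ s t := by
  classical
  apply le_antisymm
  · obtain ⟨π, hp, hd⟩ := exists_maxflow (G₁ ⊔ G₂) hst
    let Q : Fin (maxflow (G₁ ⊔ G₂) s t) → Prop := fun i => ∀ e ∈ (π i).edges, e ∈ G₁.edgeSet
    have hQ : ∀ i, ¬ Q i → ∀ e ∈ (π i).edges, e ∈ G₂.edgeSet := fun i hi =>
      (path_in_part hst hI hG₁ hG₂ (π i) (hp i)).resolve_left hi
    have h1 : Fintype.card {i // Q i} ≤ maxflow G₁ s t := by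
      refine card_le_maxflow G₁ hst (fun i => (π i.1).transfer G₁ i.2)
        (fun i => (hp i.1).transfer _) ?_
      intro i j hij
      simp only [SimpleGraph.Walk.edges_transfer]
      exact hd _ _ (fun h => hij (Subtype.ext h))
    have h2 : Fintype.card {i // ¬ Q i} ≤ maxflow G₂ s t := by
      refine card_le_maxflow G₂ hst (fun i => (π i.1).transfer G₂ (hQ i.1 i.2))
        (fun i => (hp i.1).transfer _) ?_
      intro i j hij
      simp only [SimpleGraph.Walk.edges_transfer]
      exact hd _ _ (fun h => hij (Subtype.ext h))
    have h3 := Fintype.card_congr (Equiv.sumCompl Q)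
    rw [Fintype.card_sum, Fintype.card_fin] at h3
    omega
  · obtain ⟨π₁, hp₁, hd₁⟩ := exists_maxflow G₁ hst
    obtain ⟨π₂, hp₂, hd₂⟩ := exists_maxflow G₂ hst
    have hE : ∀ i j, List.Disjoint (π₁ i).edges (π₂ j).edges := by
      intro i j e
      induction e with
      | h x y =>
        exact fun h1 h2 => hdisj x y
          ⟨(π₁ i).edges_subset_edgeSet h1, (π₂ j).edges_subset_edgeSet h2⟩
    have := card_le_maxflow (G₁ ⊔ G₂) hst
      (Sum.elim (fun i => (π₁ i).mapLe le_sup_left) (fun j => (π₂ j).mapLe le_sup_right))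
      (by
        rintro (i | j)
        · simpa using hp₁ i
        · simpa using hp₂ j)
      (by
        rintro (i | i) (j | j) hij
        · simpa using hd₁ i j (by simpa using hij)
        · simpa using hE i j
        · simpa using (hE j i).symm
        · simpa using hd₂ i j (by simpa using hij))
    simpa using this

/-! ### Parallel composition -/

/-- Parallel composition of two networks sharing only the source and the sink:
the minimal Hamiltonians add up, the maxflows add up, and the number of minimizing
labelings multiplies. (A labeling of `G₁` is encoded as a labeling of the whole vertex
set that is identically `id` outside `V₁`, and similarly for `G₂`.) -/
theorem parallel_composition {V : Type*} [Fintype V]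
    (G₁ G₂ : SimpleGraph V) (V₁ V₂ : Set V) (s t : V) (hst : s ≠ t)
    (hV : V₁ ∪ V₂ = Set.univ) (hI : V₁ ∩ V₂ = {s, t})
    (hG₁ : ∀ x y, G₁.Adj x y → x ∈ V₁ ∧ y ∈ V₁)
    (hG₂ : ∀ x y, G₂.Adj x y → x ∈ V₂ ∧ y ∈ V₂)
    (hdisj : ∀ x y, ¬(G₁.Adj x y ∧ G₂.Adj x y))
    (n : ℕ) (hn : 1 ≤ n) (γ : Equiv.Perm (Fin n)) (hγ : cycleCount γ = 1) :
    (sInf {H : ℕ | ∃ α : V → Equiv.Perm (Fin n),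
          α s = 1 ∧ α t = γ ∧ hamiltonian (G₁ ⊔ G₂) α = H}
        = sInf {H : ℕ | ∃ α : V → Equiv.Perm (Fin n),
            α s = 1 ∧ α t = γ ∧ hamiltonian G₁ α = H}
          + sInf {H : ℕ | ∃ α : V → Equiv.Perm (Fin n),
              α s = 1 ∧ α t = γ ∧ hamiltonian G₂ α = H}) ∧
    maxflow (G₁ ⊔ G₂) s t = maxflow G₁ s t + maxflow G₂ s t ∧
    {α : V → Equiv.Perm (Fin n) | α s = 1 ∧ α t = γ ∧
        ∀ β : V → Equiv.Perm (Fin n), β s = 1 → β t = γ →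
          hamiltonian (G₁ ⊔ G₂) α ≤ hamiltonian (G₁ ⊔ G₂) β}.ncard
      = {α : V → Equiv.Perm (Fin n) | α s = 1 ∧ α t = γ ∧ (∀ x ∉ V₁, α x = 1) ∧
          ∀ β : V → Equiv.Perm (Fin n), β s = 1 → β t = γ →
            hamiltonian G₁ α ≤ hamiltonian G₁ β}.ncard
        * {α : V → Equiv.Perm (Fin n) | α s = 1 ∧ α t = γ ∧ (∀ x ∉ V₂, α x = 1) ∧
            ∀ β : V → Equiv.Perm (Fin n), β s = 1 → β t = γ →
              hamiltonian G₂ α ≤ hamiltonian G₂ β}.ncard := by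
  have hsI : s ∈ V₁ ∩ V₂ := hI ▸ Or.inl rfl
  have htI : t ∈ V₁ ∩ V₂ := hI ▸ Or.inr rfl
  have hsup := fun α : V → Equiv.Perm (Fin n) => hamiltonian_sup G₁ G₂ hdisj α
  have hg1 : ∀ α β : V → Equiv.Perm (Fin n),
      hamiltonian G₁ (glue V₁ α β) = hamiltonian G₁ α := fun α β =>
    hamiltonian_congr G₁ V₁ hG₁ fun x hx => glue_of_mem α β hx
  have hg2 : ∀ α β : V → Equiv.Perm (Fin n), α s = β s → α t = β t →
      hamiltonian G₂ (glue V₁ α β) = hamiltonian G₂ β := fun α β hs ht =>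
    hamiltonian_congr G₂ V₂ hG₂ fun x hx => glue_eq_right hI hs ht hx
  have hgs : ∀ α β : V → Equiv.Perm (Fin n), glue V₁ α β s = α s := fun α β =>
    glue_of_mem α β hsI.1
  have hgt : ∀ α β : V → Equiv.Perm (Fin n), glue V₁ α β t = α t := fun α β =>
    glue_of_mem α β htI.1
  refine ⟨?_, maxflow_sup hst hI hG₁ hG₂ hdisj, ?_⟩
  · classical
    -- Some labeling satisfies the boundary conditions, so none of the infima is over `∅`.
    have hne : ∀ G : SimpleGraph V, {H : ℕ | ∃ α : V → Equiv.Perm (Fin n),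
        α s = 1 ∧ α t = γ ∧ hamiltonian G α = H}.Nonempty := fun G =>
      ⟨_, fun x => if x = t then γ else 1, by simp [hst], by simp, rfl⟩
    apply le_antisymm
    · obtain ⟨α, has, hat, hα⟩ := Nat.sInf_mem (hne G₁)
      obtain ⟨β, hbs, hbt, hβ⟩ := Nat.sInf_mem (hne G₂)
      refine Nat.sInf_le ⟨glue V₁ α β, (hgs α β).trans has, (hgt α β).trans hat, ?_⟩
      rw [hsup, hg1, hg2 α β (has.trans hbs.symm) (hat.trans hbt.symm), hα, hβ]
    · obtain ⟨α, has, hat, hα⟩ := Nat.sInf_mem (hne (G₁ ⊔ G₂))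
      rw [← hα, hsup]
      exact Nat.add_le_add (Nat.sInf_le ⟨α, has, hat, rfl⟩) (Nat.sInf_le ⟨α, has, hat, rfl⟩)
  · rw [← Set.ncard_prod]
    symm
    refine Set.ncard_congr (fun q _ => glue V₁ q.1 q.2) ?_ ?_ ?_
    · rintro ⟨α, β⟩ ⟨⟨has, hat, -, hα⟩, ⟨hbs, hbt, -, hβ⟩⟩
      refine ⟨(hgs α β).trans has, (hgt α β).trans hat, fun δ hds hdt => ?_⟩
      dsimp only
      rw [hsup, hsup, hg1, hg2 α β (has.trans hbs.symm) (hat.trans hbt.symm)]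
      exact Nat.add_le_add (hα δ hds hdt) (hβ δ hds hdt)
    · rintro ⟨α, β⟩ ⟨α', β'⟩ ⟨⟨has, hat, ha1, -⟩, ⟨hbs, hbt, hb1, -⟩⟩
        ⟨⟨has', hat', ha1', -⟩, ⟨hbs', hbt', hb1', -⟩⟩ h
      dsimp only at *
      refine Prod.ext (funext fun x => ?_) (funext fun x => ?_)
      · by_cases hx : x ∈ V₁
        · simpa only [glue_of_mem _ _ hx] using congrFun h x
        · exact (ha1 x hx).trans (ha1' x hx).symm
      · by_cases hx : x ∈ V₂
        · have := congrFun h x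
          rwa [glue_eq_right hI (has.trans hbs.symm) (hat.trans hbt.symm) hx,
            glue_eq_right hI (has'.trans hbs'.symm) (hat'.trans hbt'.symm) hx] at this
        · exact (hb1 x hx).trans (hb1' x hx).symm
    · rintro δ ⟨hds, hdt, hδ⟩
      -- The preimage of a minimizer `δ` consists of its restrictions, extended by `1`.
      have hr1 : hamiltonian G₁ (glue V₁ δ 1) = hamiltonian G₁ δ := hg1 δ 1
      have hr2 : hamiltonian G₂ (glue V₂ δ 1) = hamiltonian G₂ δ :=
        hamiltonian_congr G₂ V₂ hG₂ fun x hx => glue_of_mem δ 1 hx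
      refine ⟨(glue V₁ δ 1, glue V₂ δ 1),
        ⟨⟨(hgs _ _).trans hds, (hgt _ _).trans hdt, fun x hx => glue_of_notMem δ 1 hx, ?_⟩,
          ⟨(glue_of_mem δ 1 hsI.2).trans hds, (glue_of_mem δ 1 htI.2).trans hdt,
            fun x hx => glue_of_notMem δ 1 hx, ?_⟩⟩, ?_⟩
      · -- A competitor on `G₁` is tested against `δ` by replacing `δ` on `V₁` only.
        intro β hbs hbt
        have h := hδ (glue V₁ β δ) ((hgs _ _).trans hbs) ((hgt _ _).trans hbt)
        rw [hsup, hsup, hg1, hg2 β δ (hbs.trans hds.symm) (hbt.trans hdt.symm)] at h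
        dsimp only
        omega
      · intro β hbs hbt
        have h := hδ (glue V₁ δ β) ((hgs _ _).trans hds) ((hgt _ _).trans hdt)
        rw [hsup, hsup, hg1, hg2 δ β (hds.trans hbs.symm) (hdt.trans hbt.symm)] at h
        dsimp only
        omega
      · funext x
        dsimp only
        by_cases hx : x ∈ V₁
        · rw [glue_of_mem _ _ hx, glue_of_mem _ _ hx]
        · have hx2 : x ∈ V₂ := (hV ▸ Set.mem_univ x : x ∈ V₁ ∪ V₂).resolve_left hx
          rw [glue_of_notMem _ _ hx, glue_of_mem _ _ hx2]
end

section
/- For every n ≥ 1, the number of permutations α ∈ S_n lying on a geodesic between id and the full cycle γ_n, i.e. satisfying |α| + |α⁻¹γ_n| = n − 1, equals the n-th Catalan number Cat_n = (1/(n+1))·binom(2n, n). -/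
namespace Geodesic

open Equiv Equiv.Perm

variable {V : Type*} [DecidableEq V]

/-! ### Cycles as lists -/

/-- Two lists overlapping in `b`; no distinctness is needed. -/
lemma formPerm_append_cons (a b : V) (l₁ l₂ : List V) :
    (a :: l₁ ++ b :: l₂).formPerm = (a :: l₁ ++ [b]).formPerm * (b :: l₂).formPerm := by
  induction l₁ generalizing a with
  | nil => simp
  | cons c l ih =>
    have := ih c
    simp only [List.cons_append] at this ⊢
    rw [List.formPerm_cons_cons, this, List.formPerm_cons_cons, mul_assoc]

lemma formPerm_concat (a b : V) (l : List V) (h : (a :: l ++ [b]).Nodup) :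
    (a :: l ++ [b]).formPerm = swap a b * (a :: l).formPerm := by
  induction l generalizing a with
  | nil => simp
  | cons c l ih =>
    have h' : (c :: l ++ [b]).Nodup := (List.nodup_cons.1 h).2
    have := ih c h'
    simp only [List.cons_append] at this ⊢
    rw [List.formPerm_cons_cons, this, List.formPerm_cons_cons, ← mul_assoc, ← mul_assoc]
    congr 1
    have hab : a ≠ b := by rintro rfl; simp at h
    have hcb : c ≠ b := by rintro rfl; simp at h
    rw [mul_swap_eq_swap_mul, swap_apply_right, swap_apply_of_ne_of_ne hab.symm hcb.symm]

/-- Multiplying by the transposition of two points of a cycle cuts the cycle into two. -/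
lemma formPerm_split (a b : V) (l₁ l₂ : List V) (h : (a :: l₁ ++ b :: l₂).Nodup) :
    swap a b * (a :: l₁ ++ b :: l₂).formPerm = (a :: l₁).formPerm * (b :: l₂).formPerm := by
  have h' : (a :: l₁ ++ [b]).Nodup := h.sublist (by simp)
  rw [formPerm_append_cons, formPerm_concat _ _ _ h', ← mul_assoc, ← mul_assoc, swap_mul_self,
    one_mul]

/-- The permutation obtained from `σ` by deleting `x` from its cycle, so that `x` becomes fixed. -/
def del (x : V) (σ : Perm V) : Perm V := swap x (σ x) * σ

/-- Cutting the cycle `(x, l₁, y, l₂)` at `x` and `y` and deleting `x` leaves the cycles `l₁` and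
`y :: l₂`. -/
lemma del_swap_mul_formPerm (x y : V) (l₁ l₂ : List V) (d : Perm V)
    (h : (x :: l₁ ++ y :: l₂).Nodup) (hd : ∀ z ∈ x :: l₁ ++ y :: l₂, d z = z) :
    del x (swap x y * ((x :: l₁ ++ y :: l₂).formPerm * d))
      = l₁.formPerm * ((y :: l₂).formPerm * d) := by
  obtain ⟨h1, h2, h12⟩ := List.nodup_append'.1 h
  have hx : ((y :: l₂).formPerm * d) x = x := by
    rw [Perm.mul_apply, hd x (by simp)]
    exact List.formPerm_apply_of_notMem (h12 (by simp))
  rw [← mul_assoc, formPerm_split _ _ _ _ h, mul_assoc, del, Perm.mul_apply, hx]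
  cases l₁ with
  | nil => simp [swap_self, ← Perm.one_def]
  | cons z l =>
    rw [List.formPerm_apply_head _ _ _ h1, List.formPerm_cons_cons, mul_assoc (swap x z),
      swap_mul_self_mul]

lemma del_formPerm (x : V) (l : List V) (d : Perm V) (h : (x :: l).Nodup) (hd : d x = x) :
    del x ((x :: l).formPerm * d) = l.formPerm * d := by
  rw [del, Perm.mul_apply, hd]
  cases l with
  | nil => simp [swap_self, ← Perm.one_def]
  | cons z l =>
    rw [List.formPerm_apply_head _ _ _ h, List.formPerm_cons_cons, mul_assoc (swap x z),
      swap_mul_self_mul]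

variable [Fintype V]

/-- Every permutation splits off the cycle through a given point `x`, as a list starting at `x`. -/
lemma exists_cycle_list (σ : Perm V) (x : V) :
    ∃ (l : List V) (d : Perm V), σ = (x :: l).formPerm * d ∧ (x :: l).Nodup ∧
      (∀ y ∈ x :: l, d y = y) ∧ ∀ y, y ∈ x :: l ↔ σ.SameCycle x y := by
  by_cases hx : σ x = x
  · refine ⟨[], σ, by simp, by simp, by simpa using hx, fun y => ?_⟩
    constructor
    · intro h
      obtain rfl : y = x := by simpa using h
      exact SameCycle.refl _ _
    · rintro ⟨i, rfl⟩
      simp [zpow_apply_eq_self_of_apply_eq_self hx]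
  · have hs : x ∈ σ.support := mem_support.2 hx
    have hne : σ.toList x ≠ [] := by simpa [toList_eq_nil_iff] using hx
    obtain ⟨z, l, hl⟩ := List.exists_cons_of_ne_nil hne
    have hz : z = x := by
      have := toList_getElem_zero σ x hs
      simpa [hl] using this
    subst hz
    have hmem : ∀ y, y ∈ z :: l ↔ σ.SameCycle z y := fun y => by
      rw [← hl, mem_toList_iff]; simp [hs]
    refine ⟨l, (σ.cycleOf z)⁻¹ * σ, ?_, ?_, ?_, hmem⟩
    · rw [← hl, formPerm_toList]; simp
    · rw [← hl]; exact nodup_toList _ _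
    · intro y hy
      rw [Perm.mul_apply, inv_eq_iff_eq]
      exact (((hmem y).1 hy).cycleOf_apply).symm

lemma cycleType_formPerm_mul (l : List V) (d : Perm V) (hl : l.Nodup) (hd : ∀ y ∈ l, d y = y) :
    (l.formPerm * d).cycleType = (if 2 ≤ l.length then {l.length} else 0) + d.cycleType := by
  have hdis : Disjoint l.formPerm d := fun y => by
    by_cases hy : y ∈ l
    · exact Or.inr (hd y hy)
    · exact Or.inl (List.formPerm_apply_of_notMem hy)
  rw [hdis.cycleType_mul]
  congr 1
  split_ifs with h
  · rw [(List.isCycle_formPerm hl h).cycleType, List.support_formPerm_of_nodup l hl,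
      List.toFinset_card_of_nodup hl]
    rintro x rfl
    simp at h
  · rw [(List.formPerm_eq_one_iff _ hl).2 (by omega), cycleType_one]

/-! ### The Cayley length -/

/-- The Cayley length on an arbitrary finite set: a cycle of length `m` contributes `m - 1`, and
fixed points contribute nothing. -/
def len (σ : Perm V) : ℕ := (σ.cycleType.map (· - 1)).sum

/-- The product of the Catalan numbers of the cycle lengths of `σ`.  Fixed points do not appear in
`cycleType`, which is harmless since `catalan 1 = 1`. -/
def cat (σ : Perm V) : ℕ := (σ.cycleType.map catalan).prod

lemma len_formPerm_mul (l : List V) (d : Perm V) (hl : l.Nodup) (hd : ∀ y ∈ l, d y = y) :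
    len (l.formPerm * d) = (l.length - 1) + len d := by
  unfold len
  rw [cycleType_formPerm_mul l d hl hd]
  split_ifs with h
  · simp
  · simp; omega

lemma cat_formPerm_mul (l : List V) (d : Perm V) (hl : l.Nodup) (hd : ∀ y ∈ l, d y = y) :
    cat (l.formPerm * d) = catalan l.length * cat d := by
  unfold cat
  rw [cycleType_formPerm_mul l d hl hd]
  split_ifs with h
  · simp
  · have : l.length = 0 ∨ l.length = 1 := by omega
    rcases this with h | h <;> simp [h]

lemma len_one : len (1 : Perm V) = 0 := by simp [len]

lemma len_eq_zero {σ : Perm V} (h : len σ = 0) : σ = 1 := by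
  rw [← cycleType_eq_zero]
  refine Multiset.eq_zero_of_forall_notMem fun m hm => ?_
  have h2 := two_le_of_mem_cycleType hm
  have := Multiset.single_le_sum (fun _ _ => Nat.zero_le _) _
    (Multiset.mem_map_of_mem (· - 1) hm)
  unfold len at h
  simp only [h] at this
  omega

lemma len_conj (σ τ : Perm V) : len (τ * σ * τ⁻¹) = len σ := by
  simp [len, cycleType_conj]

lemma len_swap_mul_same {σ : Perm V} {a b : V} (hab : a ≠ b) (h : σ.SameCycle a b) :
    len (swap a b * σ) + 1 = len σ := by
  obtain ⟨l, d, hσ, hnd, hd, hmem⟩ := exists_cycle_list σ a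
  have hb : b ∈ l := by simpa [hab.symm] using (hmem b).2 h
  obtain ⟨l₁, l₂, rfl⟩ := List.append_of_mem hb
  rw [← List.cons_append] at hσ hnd hd
  obtain ⟨h1, h2, h12⟩ := List.nodup_append'.1 hnd
  rw [hσ, ← mul_assoc, formPerm_split _ _ _ _ hnd, mul_assoc, len_formPerm_mul _ _ h1,
    len_formPerm_mul _ _ h2, len_formPerm_mul _ _ hnd hd]
  · simp only [List.length_append, List.length_cons]; omega
  · exact fun y hy => hd y (List.mem_append_right _ hy)
  · intro y hy
    rw [Perm.mul_apply, hd y (List.mem_append_left _ hy)]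
    exact List.formPerm_apply_of_notMem (h12 hy)

lemma len_swap_mul_diff {σ : Perm V} {a b : V} (h : ¬ σ.SameCycle a b) :
    len (swap a b * σ) = len σ + 1 := by
  obtain ⟨l₁, d, hσ, h1, hd, hmem⟩ := exists_cycle_list σ a
  obtain ⟨l₂, e, hde, h2, he, hmem'⟩ := exists_cycle_list d b
  have h12 : List.Disjoint (a :: l₁) (b :: l₂) := by
    intro y hy hy'
    have hby := (hmem' y).1 hy'
    have : b = y := hby.symm.eq_of_left (hd y hy) |>.symm
    exact h ((hmem b).1 (this ▸ hy))
  have hnd : (a :: l₁ ++ b :: l₂).Nodup := List.nodup_append'.2 ⟨h1, h2, h12⟩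
  have he' : ∀ y ∈ a :: l₁, e y = y := by
    intro y hy
    have hy2 := hd y hy
    have hy3 := List.formPerm_apply_of_notMem (l := b :: l₂) (h12 hy)
    apply (b :: l₂).formPerm.injective
    rw [hy3, ← Perm.mul_apply, ← hde, hy2]
  have hsplit := formPerm_split a b l₁ l₂ hnd
  have : swap a b * σ = (a :: l₁ ++ b :: l₂).formPerm * e := by
    rw [hσ, hde, ← mul_assoc (List.formPerm _), ← hsplit, mul_assoc, ← mul_assoc, swap_mul_self,
      one_mul]
  rw [this, hσ, len_formPerm_mul _ _ h1 hd, hde, len_formPerm_mul _ _ h2 he,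
    len_formPerm_mul _ _ hnd]
  · simp only [List.length_append, List.length_cons]; omega
  · intro y hy
    rcases List.mem_append.1 hy with hy | hy
    exacts [he' y hy, he y hy]

lemma len_swap_mul_apply {σ : Perm V} {x : V} (hx : σ x ≠ x) :
    len (swap x (σ x) * σ) + 1 = len σ :=
  len_swap_mul_same hx.symm (sameCycle_apply_right.2 (SameCycle.refl _ _))

lemma len_swap_mul_le (σ : Perm V) (a b : V) : len (swap a b * σ) ≤ len σ + 1 := by
  by_cases hab : a = b
  · subst hab; simp [swap_self, ← Perm.one_def]
  by_cases h : σ.SameCycle a b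
  · have := len_swap_mul_same hab h; omega
  · exact (len_swap_mul_diff h).le

lemma len_mul_le (α β : Perm V) : len (α * β) ≤ len α + len β := by
  induction hk : len α generalizing α with
  | zero => simp [len_eq_zero hk]
  | succ k ih =>
    obtain ⟨x, hx⟩ : ∃ x, α x ≠ x := by
      by_contra! hc
      rw [show α = 1 from Perm.ext hc, len_one] at hk
      omega
    have h1 := len_swap_mul_apply hx
    have h2 := ih (swap x (α x) * α) (by omega)
    have h3 := len_swap_mul_le (swap x (α x) * α * β) x (α x)
    rw [mul_assoc, ← mul_assoc (swap _ _), swap_mul_self, one_mul] at h3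
    rw [mul_assoc] at h2
    omega

/-! ### Geodesics -/

/-- `α` lies on a geodesic from `1` to `σ`. -/
def Geo (α σ : Perm V) : Prop := len α + len (σ * α⁻¹) = len σ

lemma Geo.sameCycle {α σ : Perm V} (h : Geo α σ) (x : V) : σ.SameCycle x (α x) := by
  by_contra hc
  have hx : α x ≠ x := fun hx => hc (by rw [hx])
  have h1 := len_swap_mul_diff hc
  have h2 := len_swap_mul_apply hx
  have h3 := len_mul_le (swap x (α x) * σ * α⁻¹ * (swap x (α x))⁻¹) (swap x (α x) * α)
  rw [mul_assoc (swap _ _) σ, len_conj] at h3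
  simp only [mul_assoc, inv_mul_cancel_left, inv_mul_cancel, mul_one] at h3
  unfold Geo at h
  omega

/-- Reduction of the case `α x = y` to permutations fixing `x`. -/
lemma geo_swap_mul_iff {α σ : Perm V} {x y : V} (hxy : σ.SameCycle x y) (hα : α x = y) :
    Geo (swap x y * α) (swap x y * σ) ↔ Geo α σ := by
  subst hα
  by_cases hx : α x = x
  · simp [hx, swap_self, ← Perm.one_def]
  have h1 := len_swap_mul_same (Ne.symm hx) hxy
  have h2 := len_swap_mul_apply hx
  have h3 := len_conj (σ * α⁻¹) (swap x (α x))
  unfold Geo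
  rw [mul_inv_rev, show swap x (α x) * σ * (α⁻¹ * (swap x (α x))⁻¹)
    = swap x (α x) * (σ * α⁻¹) * (swap x (α x))⁻¹ by simp only [mul_assoc]]
  omega

/-- A permutation below `σ` fixes `x` iff it is below `σ` with `x` deleted. -/
lemma geo_del_iff (α σ : Perm V) (x : V) : Geo α (del x σ) ↔ Geo α σ ∧ α x = x := by
  have key : α x = x → (Geo α (del x σ) ↔ Geo α σ) := by
    intro hα
    unfold del
    by_cases hx : σ x = x
    · simp [hx, swap_self, ← Perm.one_def]
    have h1 := len_swap_mul_apply hx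
    have hα' : α⁻¹ x = x := by rw [inv_eq_iff_eq, hα]
    have h2 := len_swap_mul_apply (σ := σ * α⁻¹) (x := x) (by rwa [Perm.mul_apply, hα'])
    rw [Perm.mul_apply, hα'] at h2
    unfold Geo
    rw [mul_assoc]
    omega
  refine ⟨fun h => ?_, fun h => (key h.2).2 h.1⟩
  have hfix : del x σ x = x := by simp [del]
  have hα : α x = x := (h.sameCycle x).eq_of_left hfix |>.symm
  exact ⟨(key hα).1 h, hα⟩

open Classical in
/-- The number of permutations below `σ`. -/
noncomputable def num (σ : Perm V) : ℕ := (Finset.univ.filter fun α => Geo α σ).card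

open Classical in
lemma card_geo_apply_eq {σ : Perm V} {x y : V} (hxy : σ.SameCycle x y) :
    (Finset.univ.filter fun α => Geo α σ ∧ α x = y).card = num (del x (swap x y * σ)) := by
  unfold num
  refine Finset.card_nbij' (fun α => swap x y * α) (fun α => swap x y * α) ?_ ?_ ?_ ?_
  · intro α hα
    simp only [Finset.coe_filter, Finset.mem_univ, true_and, Set.mem_ofPred_eq] at hα ⊢
    rw [geo_del_iff, geo_swap_mul_iff hxy hα.2]
    exact ⟨hα.1, by simp [hα.2]⟩
  · intro α hα
    simp only [Finset.coe_filter, Finset.mem_univ, true_and, Set.mem_ofPred_eq] at hα ⊢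
    rw [geo_del_iff] at hα
    have hy : (swap x y * α) x = y := by simp [hα.2]
    refine ⟨?_, hy⟩
    rw [← geo_swap_mul_iff hxy hy, ← mul_assoc, swap_mul_self, one_mul]
    exact hα.1
  · intro α _; simp [← mul_assoc]
  · intro α _; simp [← mul_assoc]

lemma len_del_le (x : V) (σ : Perm V) : len (del x σ) ≤ len σ := by
  by_cases hx : σ x = x
  · simp [del, hx, swap_self, ← Perm.one_def]
  · have := len_swap_mul_apply hx
    unfold del; omega

lemma len_del_swap_lt {σ : Perm V} {x y : V} (hx : σ x ≠ x) (hxy : σ.SameCycle x y) :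
    len (del x (swap x y * σ)) < len σ := by
  by_cases h : x = y
  · subst h
    have := len_swap_mul_apply hx
    simp only [swap_self, ← Perm.one_def, one_mul]
    unfold del; omega
  · have := len_swap_mul_same h hxy
    have := len_del_le x (swap x y * σ)
    omega

/-- The Catalan recursion, summed over the possible images `y` of `x`. -/
lemma sum_cat_del (x : V) (l : List V) (d : Perm V) (h : (x :: l).Nodup)
    (hd : ∀ z ∈ x :: l, d z = z) :
    ∑ y ∈ (x :: l).toFinset, cat (del x (swap x y * ((x :: l).formPerm * d)))
      = cat ((x :: l).formPerm * d) := by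
  have hl : l.Nodup := (List.nodup_cons.1 h).2
  have hdl : ∀ z ∈ l, d z = z := fun z hz => hd z (List.mem_cons_of_mem _ hz)
  rw [List.sum_toFinset _ h, List.map_cons, List.sum_cons, swap_self, ← Perm.one_def, one_mul,
    del_formPerm x l d h (hd x (by simp)), cat_formPerm_mul l d hl hdl, cat_formPerm_mul _ d h hd,
    List.length_cons, catalan_succ, Fin.sum_univ_castSucc, ← Fin.sum_univ_fun_getElem]
  have hterm : ∀ i : Fin l.length, cat (del x (swap x l[i] * ((x :: l).formPerm * d)))
      = catalan i * catalan (l.length - i) * cat d := by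
    intro i
    have hsplit : l = l.take i ++ l[i] :: l.drop (i + 1) := by simp
    have hlen : (l.take i).length = i := by simp
    have hlen' : (l[i] :: l.drop (i + 1)).length = l.length - i := by
      simp only [List.length_cons, List.length_drop]; omega
    generalize l.take i = l₁ at hsplit hlen
    generalize l.drop (i + 1) = l₂ at hsplit hlen'
    generalize l[i] = y at hsplit hlen' ⊢
    rw [← hlen', ← hlen]
    subst hsplit
    obtain ⟨h1, h2, h12⟩ := List.nodup_append'.1 hl
    rw [← List.cons_append] at h hd ⊢
    rw [del_swap_mul_formPerm x y l₁ l₂ d h hd, cat_formPerm_mul _ _ h1, cat_formPerm_mul _ _ h2,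
      mul_assoc]
    · exact fun z hz => hdl z (List.mem_append_right _ hz)
    · intro z hz
      rw [Perm.mul_apply, hdl z (List.mem_append_left _ hz)]
      exact List.formPerm_apply_of_notMem (h12 hz)
  -- the image `y = x` supplies the last term of the Catalan sum
  simp only [Fin.val_castSucc, Fin.val_last, Nat.sub_self, catalan_zero, mul_one, add_mul,
    Finset.sum_mul]
  rw [add_comm]
  congr 1
  exact Finset.sum_congr rfl fun i _ => hterm i

/-- The number of permutations below `σ` is the product of the Catalan numbers of its cycle
lengths. -/
theorem card_geo (σ : Perm V) : num σ = cat σ := by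
  classical
  induction hk : len σ using Nat.strong_induction_on generalizing σ with
  | _ k ih =>
  by_cases h1 : σ = 1
  · subst h1
    have : (Finset.univ.filter fun α : Perm V => Geo α 1) = {1} := by
      ext α
      simp only [Finset.mem_filter, Finset.mem_univ, true_and, Finset.mem_singleton, Geo, len_one]
      refine ⟨fun h => len_eq_zero (by omega), ?_⟩
      rintro rfl
      simp [len_one]
    simp [num, this, cat]
  obtain ⟨x, hx⟩ : ∃ x, σ x ≠ x := by
    by_contra! hc
    exact h1 (Perm.ext hc)
  obtain ⟨l, d, hσ, hnd, hd, hmem⟩ := exists_cycle_list σ x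
  have hmaps : ∀ α ∈ (Finset.univ.filter fun α => Geo α σ), α x ∈ (x :: l).toFinset := by
    intro α hα
    rw [List.mem_toFinset, hmem]
    exact Geo.sameCycle (Finset.mem_filter.1 hα).2 x
  rw [num, Finset.card_eq_sum_card_fiberwise hmaps]
  calc _ = ∑ y ∈ (x :: l).toFinset, cat (del x (swap x y * σ)) := by
        refine Finset.sum_congr rfl fun y hy => ?_
        have hxy := (hmem y).1 (List.mem_toFinset.1 hy)
        rw [Finset.filter_filter, card_geo_apply_eq hxy]
        exact ih _ (hk ▸ len_del_swap_lt hx hxy) _ rfl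
    _ = cat σ := by rw [hσ]; exact sum_cat_del x l d hnd hd

/-! ### Permutations of `Fin n` -/

lemma len_add_card_cycleType (σ : Perm V) : len σ + σ.cycleType.card = σ.support.card := by
  rw [← sum_cycleType, len]
  have h : ∀ m ∈ σ.cycleType, 1 ≤ m := fun m hm => one_lt_of_mem_cycleType hm |>.le
  generalize σ.cycleType = s at h
  induction s using Multiset.induction_on with
  | empty => simp
  | cons a s ih =>
    have := ih fun m hm => h m (Multiset.mem_cons_of_mem hm)
    have := h a (Multiset.mem_cons_self _ _)
    simp only [Multiset.map_cons, Multiset.sum_cons, Multiset.card_cons]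
    omega

lemma cayleyLength_eq_len {n : ℕ} (σ : Perm (Fin n)) : cayleyLength σ = len σ := by
  have h1 := len_add_card_cycleType σ
  have h2 : σ.support.card ≤ n := by simpa using Finset.card_le_univ σ.support
  unfold cayleyLength cycleCount
  omega

end Geodesic

open Geodesic

/-- The number of permutations in `S_n` lying on a geodesic between `id` and the full cycle
`γ` equals the `n`-th Catalan number. -/
theorem card_geodesic_eq_catalan (n : ℕ) (hn : 1 ≤ n)
    (γ : Equiv.Perm (Fin n)) (hγ : cycleCount γ = 1) :
    {α : Equiv.Perm (Fin n) | cayleyLength α + cayleyLength (α⁻¹ * γ) = n - 1}.ncard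
      = catalan n := by
  classical
  have hlen : len γ = n - 1 := by
    rw [← cayleyLength_eq_len, cayleyLength, hγ]
  have hset : {α : Equiv.Perm (Fin n) | cayleyLength α + cayleyLength (α⁻¹ * γ) = n - 1}
      = ((Finset.univ.filter fun α => Geo α γ : Finset (Equiv.Perm (Fin n))) : Set _) := by
    ext α
    have hconj := len_conj (α⁻¹ * γ) α
    rw [mul_inv_cancel_left] at hconj
    simp [Geo, cayleyLength_eq_len, hlen, hconj]
  have hcat : cat γ = catalan n := by
    have h1 := len_add_card_cycleType γ
    have h2 : γ.support.card ≤ n := by simpa using Finset.card_le_univ γ.support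
    have hsum := Equiv.Perm.sum_cycleType γ
    unfold cycleCount at hγ
    -- a single cycle is either one nontrivial cycle, or the only fixed point when `n = 1`
    rcases Nat.eq_zero_or_pos γ.cycleType.card with h0 | h0
    · have hct := Multiset.card_eq_zero.1 h0
      obtain rfl : n = 1 := by
        rw [hct, Multiset.sum_zero] at hsum
        omega
      simp [cat, hct]
    · have hc : γ.cycleType.card = 1 := by omega
      obtain ⟨m, hm⟩ := Multiset.card_eq_one.1 hc
      obtain rfl : m = n := by
        rw [hm, Multiset.sum_singleton] at hsum
        omega
      simp [cat, hm]
  rw [hset, Set.ncard_coe_finset, ← hcat, ← card_geo, num]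
end

section
/- For every n ≥ 1 and s ≥ 1, the number of s-tuples (α₁, …, α_s) ∈ (S_n)^s satisfying the geodesic equation |α₁| + Σ_{i=1}^{s−1} |α_i⁻¹ α_{i+1}| + |α_s⁻¹ γ_n| = n − 1 equals the Fuss–Catalan number FC_{n,s} = (1/(sn+1))·binom(sn + n, n). -/
open Equiv Equiv.Perm

/-! ### Cayley length and invariant functions -/

/-- The Cayley length `|σ|` of a permutation of a finite type, as the sum of `ℓ - 1` over the
lengths `ℓ` of the nontrivial cycles. -/
def permLength {V : Type*} [Fintype V] [DecidableEq V] (σ : Perm V) : ℕ :=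
  (σ.cycleType.map (fun l => l - 1)).sum

/-- The space of rational functions on `V` that are invariant under `σ`. -/
def fixedFunctions {V : Type*} (σ : Perm V) : Submodule ℚ (V → ℚ) where
  carrier := {f | ∀ v, f (σ v) = f v}
  add_mem' := by intro f g hf hg v; simp [hf v, hg v]
  zero_mem' := by intro v; rfl
  smul_mem' := by intro c f hf v; simp [hf v]

lemma mem_fixedFunctions {V : Type*} {σ : Perm V} {f : V → ℚ} :
    f ∈ fixedFunctions σ ↔ ∀ v, f (σ v) = f v := Iff.rfl

lemma permLength_add_card {V : Type*} [Fintype V] [DecidableEq V] (σ : Perm V) :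
    permLength σ + Multiset.card σ.cycleType = σ.support.card := by
  rw [← sum_cycleType, permLength]
  have h : ∀ s : Multiset ℕ, (∀ l ∈ s, 2 ≤ l) →
      (s.map (fun l => l - 1)).sum + Multiset.card s = s.sum := by
    intro s
    induction s using Multiset.induction_on with
    | empty => simp
    | cons a s ih =>
      intro hs
      have h1 := ih (fun l hl => hs l (Multiset.mem_cons_of_mem hl))
      have h2 := hs a (Multiset.mem_cons_self a s)
      simp only [Multiset.map_cons, Multiset.sum_cons, Multiset.card_cons]
      omega
  exact h _ (fun l hl => two_le_of_mem_cycleType hl)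

/-- Labels a point by the cycle through it, or by itself if it is fixed. -/
def orbitLabel {V : Type*} [Fintype V] [DecidableEq V] (σ : Perm V) (v : V) : Perm V ⊕ V :=
  if v ∈ σ.support then Sum.inl (σ.cycleOf v) else Sum.inr v

lemma orbitLabel_eq_iff {V : Type*} [Fintype V] [DecidableEq V] (σ : Perm V) (v w : V) :
    orbitLabel σ v = orbitLabel σ w ↔ σ.SameCycle v w := by
  unfold orbitLabel
  by_cases hv : v ∈ σ.support <;> by_cases hw : w ∈ σ.support
  · simp [hv, hw, sameCycle_iff_cycleOf_eq_of_mem_support hv hw]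
  · simp only [hv, hw, if_true, if_false, reduceCtorEq, false_iff]
    intro h
    rw [mem_support] at hv hw
    exact hv (h.apply_eq_self_iff.2 (not_not.1 hw))
  · simp only [hv, hw, if_true, if_false, reduceCtorEq, false_iff]
    intro h
    rw [mem_support] at hv hw
    exact hw (h.apply_eq_self_iff.1 (not_not.1 hv))
  · simp only [hv, hw, if_false, Sum.inr.injEq]
    rw [notMem_support] at hv
    exact ⟨fun h => h ▸ SameCycle.refl _ _, fun h => h.eq_of_left hv⟩

lemma image_orbitLabel {V : Type*} [Fintype V] [DecidableEq V] (σ : Perm V) :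
    Finset.univ.image (orbitLabel σ) = σ.cycleFactorsFinset.disjSum σ.supportᶜ := by
  ext c
  simp only [Finset.mem_image, Finset.mem_univ, true_and]
  constructor
  · rintro ⟨v, rfl⟩
    unfold orbitLabel
    by_cases hv : v ∈ σ.support
    · simp only [hv, if_true, Finset.inl_mem_disjSum]
      exact cycleOf_mem_cycleFactorsFinset_iff.2 hv
    · simp only [hv, if_false, Finset.inr_mem_disjSum, Finset.mem_compl, not_false_eq_true]
  · rcases c with c | v
    · intro hc
      rw [Finset.inl_mem_disjSum] at hc
      have hcyc := (mem_cycleFactorsFinset_iff.1 hc).1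
      obtain ⟨v, hv⟩ := hcyc.nonempty_support
      refine ⟨v, ?_⟩
      have h2 := mem_cycleFactorsFinset_support_le hc hv
      rw [orbitLabel, if_pos h2, cycle_is_cycleOf hv hc]
    · intro hv
      rw [Finset.inr_mem_disjSum, Finset.mem_compl] at hv
      exact ⟨v, by rw [orbitLabel, if_neg hv]⟩

/-- Invariant functions are the functions of the orbit label. -/
lemma finrank_fixedFunctions {V : Type*} [Fintype V] [DecidableEq V] (σ : Perm V) :
    Module.finrank ℚ (fixedFunctions σ) = (Finset.univ.image (orbitLabel σ)).card := by
  have hmem : ∀ v, orbitLabel σ v ∈ Finset.univ.image (orbitLabel σ) :=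
    fun v => Finset.mem_image_of_mem _ (Finset.mem_univ v)
  let φ : ((Finset.univ.image (orbitLabel σ)) → ℚ) →ₗ[ℚ] (V → ℚ) :=
    LinearMap.funLeft ℚ ℚ (fun v => ⟨orbitLabel σ v, hmem v⟩)
  have hinj : Function.Injective φ := by
    apply LinearMap.funLeft_injective_of_surjective
    rintro ⟨c, hc⟩
    obtain ⟨v, -, rfl⟩ := Finset.mem_image.1 hc
    exact ⟨v, rfl⟩
  have hrange : LinearMap.range φ = fixedFunctions σ := by
    ext f
    rw [LinearMap.mem_range, mem_fixedFunctions]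
    constructor
    · rintro ⟨g, rfl⟩ v
      have : orbitLabel σ (σ v) = orbitLabel σ v := by
        rw [orbitLabel_eq_iff]
        exact (sameCycle_apply_left).2 (SameCycle.refl _ _)
      simp only [φ, LinearMap.funLeft_apply, this]
    · intro hf
      have hpow : ∀ (i : ℕ) v, f ((σ ^ i) v) = f v := by
        intro i
        induction i with
        | zero => simp
        | succ i ih => intro v; rw [pow_succ', Perm.mul_apply, hf, ih]
      have hsame : ∀ v w, σ.SameCycle v w → f v = f w := by
        intro v w h
        obtain ⟨i, -, -, hi⟩ := h.exists_pow_eq''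
        rw [← hi, hpow]
      have hch : ∀ c : (Finset.univ.image (orbitLabel σ)), ∃ v, orbitLabel σ v = c.1 := by
        rintro ⟨c, hc⟩
        obtain ⟨v, -, rfl⟩ := Finset.mem_image.1 hc
        exact ⟨v, rfl⟩
      choose r hr using hch
      refine ⟨fun c => f (r c), ?_⟩
      funext v
      simp only [φ, LinearMap.funLeft_apply]
      exact hsame _ _ ((orbitLabel_eq_iff σ _ _).1 (hr _))
  rw [← hrange, LinearMap.finrank_range_of_inj hinj, Module.finrank_fintype_fun_eq_card,
    Fintype.card_coe]

/-- The Cayley length is the codimension of the space of invariant functions. -/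
lemma permLength_add_finrank {V : Type*} [Fintype V] [DecidableEq V] (σ : Perm V) :
    permLength σ + Module.finrank ℚ (fixedFunctions σ) = Fintype.card V := by
  rw [finrank_fixedFunctions, image_orbitLabel, Finset.card_disjSum, Finset.card_compl]
  have h1 := permLength_add_card σ
  have h2 : Multiset.card σ.cycleType = σ.cycleFactorsFinset.card := by
    simp [cycleType_def]
  have h3 := Finset.card_le_univ σ.support
  omega

/-- The space of functions invariant under all members of a list of permutations. -/
def commonFixed {V : Type*} (l : List (Perm V)) : Submodule ℚ (V → ℚ) :=
  l.foldr (fun σ W => fixedFunctions σ ⊓ W) ⊤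

lemma mem_commonFixed {V : Type*} {l : List (Perm V)} {f : V → ℚ} :
    f ∈ commonFixed l ↔ ∀ σ ∈ l, f ∈ fixedFunctions σ := by
  induction l with
  | nil => simp [commonFixed]
  | cons a l ih =>
    have : commonFixed (a :: l) = fixedFunctions a ⊓ commonFixed l := rfl
    simp [this, ih]

lemma commonFixed_le {V : Type*} (l : List (Perm V)) :
    commonFixed l ≤ fixedFunctions l.prod := by
  induction l with
  | nil => intro f _ v; simp
  | cons a l ih =>
    intro f hf v
    have h : f ∈ fixedFunctions a ⊓ commonFixed l := hf
    rw [List.prod_cons, Perm.mul_apply, h.1, ih h.2]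

lemma card_le_finrank_commonFixed {V : Type*} [Fintype V] [DecidableEq V] (l : List (Perm V)) :
    Fintype.card V ≤ (l.map permLength).sum + Module.finrank ℚ (commonFixed l) := by
  induction l with
  | nil =>
    have h : commonFixed ([] : List (Perm V)) = ⊤ := rfl
    rw [h, finrank_top, Module.finrank_fintype_fun_eq_card]
    simp
  | cons a l ih =>
    have h0 : commonFixed (a :: l) = fixedFunctions a ⊓ commonFixed l := rfl
    have h1 := Submodule.finrank_sup_add_finrank_inf_eq (fixedFunctions a) (commonFixed l)
    have h2 := permLength_add_finrank a
    have h3 := Submodule.finrank_le (fixedFunctions a ⊔ commonFixed l)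
    rw [Module.finrank_fintype_fun_eq_card] at h3
    rw [h0, List.map_cons, List.sum_cons]
    omega

/-- The Cayley length is subadditive. -/
lemma permLength_prod_le {V : Type*} [Fintype V] [DecidableEq V] (l : List (Perm V)) :
    permLength l.prod ≤ (l.map permLength).sum := by
  have h1 := card_le_finrank_commonFixed l
  have h2 := permLength_add_finrank l.prod
  have h3 := Submodule.finrank_mono (commonFixed_le l)
  omega

/-- In a minimal factorization, every function invariant under the product is invariant under
each factor; this is the equality case of subadditivity of codimension. -/
lemma fixedFunctions_le_of_minimal {V : Type*} [Fintype V] [DecidableEq V] (l : List (Perm V))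
    (h : (l.map permLength).sum ≤ permLength l.prod) {σ : Perm V} (hσ : σ ∈ l) :
    fixedFunctions l.prod ≤ fixedFunctions σ := by
  have h1 := card_le_finrank_commonFixed l
  have h2 := permLength_add_finrank l.prod
  have h3 := Submodule.eq_of_le_of_finrank_le (commonFixed_le l) (by omega)
  rw [← h3]
  intro f hf
  exact mem_commonFixed.1 hf σ hσ

/-- A minimal factorization preserves every set that is a union of orbits of the product. -/
lemma mem_iff_of_minimal {V : Type*} [Fintype V] [DecidableEq V] (l : List (Perm V))
    (h : (l.map permLength).sum ≤ permLength l.prod) {σ : Perm V} (hσ : σ ∈ l)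
    (p : V → Prop) [DecidablePred p] (hp : ∀ v, p (l.prod v) ↔ p v) (v : V) :
    p (σ v) ↔ p v := by
  have h1 : (fun v => if p v then (1 : ℚ) else 0) ∈ fixedFunctions l.prod := by
    intro v
    simp [hp v]
  have h2 := fixedFunctions_le_of_minimal l h hσ h1 v
  by_cases h3 : p (σ v) <;> by_cases h4 : p v <;> simp_all

/-- Cutting `x` out of its cycle lowers the Cayley length. -/
lemma permLength_mul_swap_lt {V : Type*} [Fintype V] [DecidableEq V] (σ : Perm V) {x z : V}
    (hz : σ z = x) (hxz : z ≠ x) : permLength (σ * swap x z) < permLength σ := by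
  have h1 := permLength_add_finrank σ
  have h2 := permLength_add_finrank (σ * swap x z)
  have hlt : fixedFunctions σ < fixedFunctions (σ * swap x z) := by
    refine lt_of_le_of_ne ?_ ?_
    · intro f hf v
      have hzx : f x = f z := by rw [← hz, hf]
      rw [Perm.mul_apply, hf]
      by_cases h1 : v = x
      · subst h1; simp [hzx]
      · by_cases h2 : v = z
        · subst h2; simp [hzx]
        · rw [swap_apply_of_ne_of_ne h1 h2]
    · intro heq
      have hmem : (Pi.single x 1 : V → ℚ) ∈ fixedFunctions (σ * swap x z) := by
        intro v
        by_cases h1 : v = x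
        · subst h1; simp [hz]
        · have : (σ * swap x z) v ≠ x := by
            intro h
            apply h1
            apply (σ * swap x z).injective
            rw [h]; simp [hz]
          rw [Pi.single_eq_of_ne this, Pi.single_eq_of_ne h1]
      rw [← heq] at hmem
      have := hmem z
      rw [hz, Pi.single_eq_same, Pi.single_eq_of_ne hxz] at this
      exact one_ne_zero this
  have h3 := Submodule.finrank_lt_finrank_of_lt hlt
  omega

lemma permLength_mul_swap_le {V : Type*} [Fintype V] [DecidableEq V] (σ : Perm V) (x z : V) :
    permLength (σ * swap x z) ≤ permLength σ + 1 := by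
  have h := permLength_prod_le [σ, swap x z]
  have h2 : permLength (swap x z) ≤ 1 := by
    by_cases hxz : x = z
    · subst hxz
      rw [swap_self, ← Perm.one_def]
      simp [permLength]
    · simp [permLength, (isCycle_swap hxz).cycleType, card_support_swap hxz]
  simp at h
  omega

lemma permLength_subtypeCongr {V : Type*} [Fintype V] [DecidableEq V] (p : V → Prop)
    [DecidablePred p] (a : Perm {v // p v}) (b : Perm {v // ¬ p v}) :
    permLength (a.subtypeCongr b) = permLength a + permLength b := by
  have h : a.subtypeCongr b = ofSubtype a * ofSubtype b := by
    ext v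
    by_cases hv : p v
    · rw [Perm.subtypeCongr.left_apply _ _ hv, Perm.mul_apply,
        ofSubtype_apply_of_not_mem b (not_not.2 hv), ofSubtype_apply_of_mem a hv]
    · rw [Perm.subtypeCongr.right_apply _ _ hv, Perm.mul_apply, ofSubtype_apply_of_mem b hv,
        ofSubtype_apply_of_not_mem a (b ⟨v, hv⟩).2]
  have hd : Perm.Disjoint (ofSubtype a) (ofSubtype b) := by
    intro v
    by_cases hv : p v
    · exact Or.inr (ofSubtype_apply_of_not_mem b (not_not.2 hv))
    · exact Or.inl (ofSubtype_apply_of_not_mem a hv)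
  rw [h, permLength, hd.cycleType_mul, cycleType_ofSubtype, cycleType_ofSubtype,
    Multiset.map_add, Multiset.sum_add]
  rfl

lemma permLength_of_isCycleOn {V : Type*} [Fintype V] [DecidableEq V] {γ : Perm V}
    (hγ : γ.IsCycleOn (Finset.univ : Finset V)) [Nonempty V] :
    permLength γ + 1 = Fintype.card V := by
  have h := permLength_add_finrank γ
  rw [finrank_fixedFunctions] at h
  have : (Finset.univ.image (orbitLabel γ)).card = 1 := by
    obtain ⟨x⟩ := ‹Nonempty V›
    rw [Finset.card_eq_one]
    refine ⟨orbitLabel γ x, ?_⟩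
    ext c
    simp only [Finset.mem_image, Finset.mem_univ, true_and, Finset.mem_singleton]
    constructor
    · rintro ⟨v, rfl⟩
      exact (orbitLabel_eq_iff γ v x).2 (hγ.2 (by simp) (by simp))
    · rintro rfl
      exact ⟨x, rfl⟩
  omega

/-! ### Coefficients of powers of the Fuss–Catalan series -/

/-- The coefficients `[X ^ n] F ^ r` of the power series `F = 1 + X F ^ m`, given by the recursion
coming from `F ^ (r + 1) = F ^ r + X F ^ (r + m)`. -/
def raney (m : ℕ) : ℕ → ℕ → ℕ
  | 0, _ => 1
  | _ + 1, 0 => 0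
  | n + 1, r + 1 => raney m (n + 1) r + raney m n (r + m)

/-- The convolution identity `F ^ r * F ^ s = F ^ (r + s)`. -/
lemma sum_raney_mul (m s : ℕ) (n r : ℕ) :
    ∑ i ∈ Finset.range (n + 1), raney m i r * raney m (n - i) s = raney m n (r + s) := by
  induction n generalizing r with
  | zero => simp [raney]
  | succ n ih =>
    induction r with
    | zero =>
      rw [Finset.sum_range_succ', Finset.sum_eq_zero]
      · simp [raney]
      · intro i _
        simp [raney]
    | succ r ihr =>
      have h := ih (r + m)
      rw [Finset.sum_range_succ'] at ihr ⊢
      simp only [raney, Nat.add_sub_add_right, add_mul, Finset.sum_add_distrib] at ihr ⊢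
      rw [h, show r + 1 + s = (r + s) + 1 by ring]
      simp only [raney]
      rw [show r + s + m = r + m + s by ring]
      omega

lemma raney_formula (m : ℕ) (hm : 1 ≤ m) (n r : ℕ) :
    (m * n + r) * raney m n r = r * (m * n + r).choose n := by
  induction n generalizing r with
  | zero => simp [raney]
  | succ n ih =>
    induction r with
    | zero => simp [raney]
    | succ r ihr =>
      have h := ih (r + m)
      have e1 : m * n + (r + m) = m * (n + 1) + r := by ring
      rw [e1] at h
      obtain ⟨N, hN⟩ : ∃ N, m * (n + 1) + r = N + 1 := ⟨m * (n + 1) + r - 1, by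
        have : 1 ≤ m * (n + 1) := Nat.mul_pos hm (Nat.succ_pos n)
        omega⟩
      rw [hN] at h ihr
      have e2 : m * (n + 1) + (r + 1) = N + 2 := by omega
      rw [e2]
      simp only [raney]
      have p1 := Nat.choose_succ_succ (N + 1) n
      have p3 := Nat.choose_succ_right_eq (N + 1) n
      have hnN : n ≤ N := by nlinarith
      have p3' : (N + 1).choose (n + 1) * (n + 1) + (N + 1).choose n * n
          = (N + 1).choose n * (N + 1) := by
        rw [p3, ← mul_add, Nat.sub_add_cancel (by omega)]
      rw [p1]
      simp only [Nat.succ_eq_add_one]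
      generalize (N + 1).choose (n + 1) = A at *
      generalize (N + 1).choose n = B at *
      apply Nat.eq_of_mul_eq_mul_left (Nat.succ_pos N)
      have hN' : (m : ℤ) * (n + 1) + r = N + 1 := by exact_mod_cast hN
      have hh : ((N : ℤ) + 1) * raney m n (r + m) = (r + m) * B := by exact_mod_cast h
      have hr : ((N : ℤ) + 1) * raney m (n + 1) r = r * A := by exact_mod_cast ihr
      have p3z : (A : ℤ) * (n + 1) + B * n = B * (N + 1) := by exact_mod_cast p3'
      have goal : ((N : ℤ) + 1) * ((N + 2) * (raney m (n + 1) r + raney m n (r + m)))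
          = (N + 1) * ((r + 1) * (A + B)) := by
        have : ((N : ℤ) + 1) * ((N + 2) * (raney m (n + 1) r + raney m n (r + m)))
          = (N + 2) * (r * A + (r + m) * B) := by
          rw [← hh, ← hr]; ring
        rw [this]
        have hn0 : (n : ℤ) + 1 ≠ 0 := by positivity
        apply mul_left_cancel₀ hn0
        linear_combination ((N + 2) * r - (N + 1) * (r + 1)) * p3z + (N + 2) * B * hN'
      rw [add_comm B A]
      exact_mod_cast goal

lemma raney_one (m n : ℕ) :
    raney (m + 1) n 1 = (m * n + n).choose n / (m * n + 1) := by
  have h := raney_formula (m + 1) (by omega) n 1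
  have e : (m + 1) * n = m * n + n := by ring
  rw [e, one_mul] at h
  have h3 := Nat.choose_mul_succ_eq (m * n + n) n
  rw [show m * n + n + 1 - n = m * n + 1 by omega] at h3
  symm
  apply Nat.div_eq_of_eq_mul_right (by omega)
  apply Nat.eq_of_mul_eq_mul_left (Nat.succ_pos (m * n + n))
  simp only [Nat.succ_eq_add_one]
  calc (m * n + n + 1) * (m * n + n).choose n
      = (m * n + n + 1).choose n * (m * n + 1) := by rw [← h3]; ring
    _ = _ := by rw [← h]; ring

/-! ### Minimal factorizations -/

/-- The minimal factorizations `γ = β₀ ⋯ β_{m-1}`, `∑ |βᵢ| = |γ|`, in which the factors with index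
at least `j` fix the point `x`. -/
def minFact {V : Type*} [Fintype V] [DecidableEq V] (m j : ℕ) (x : V) (γ : Perm V) :
    Set (Fin m → Perm V) :=
  {β | (List.ofFn β).prod = γ ∧ ∑ i, permLength (β i) = permLength γ ∧
    ∀ i : Fin m, j ≤ i.1 → β i x = x}

lemma map_ofFn_sum {V : Type*} [Fintype V] [DecidableEq V] {m : ℕ} (β : Fin m → Perm V) :
    ((List.ofFn β).map permLength).sum = ∑ i, permLength (β i) := by
  rw [List.map_ofFn, List.sum_ofFn]; rfl

/-- Minimal factorizations of a permutation with two invariant blocks are pairs of minimal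
factorizations of the two restrictions. -/
lemma ncard_minFact_subtypeCongr {V : Type*} [Fintype V] [DecidableEq V] (m j : ℕ)
    (p : V → Prop) [DecidablePred p] (a : Perm {v // p v}) (b : Perm {v // ¬ p v})
    (w : {v // p v}) (x : {v // ¬ p v}) :
    (minFact m j x.1 (a.subtypeCongr b)).ncard
      = (minFact m m w a).ncard * (minFact m j x b).ncard := by
  let Φ : (Fin m → Perm {v // p v}) × (Fin m → Perm {v // ¬ p v}) → (Fin m → Perm V) :=
    fun q i => (q.1 i).subtypeCongr (q.2 i)
  have hΦ : Function.Injective Φ := by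
    rintro ⟨q1, q2⟩ ⟨r1, r2⟩ h
    have h' : ∀ i, (q1 i, q2 i) = (r1 i, r2 i) := fun i =>
      subtypeCongrHom_injective p (congrFun h i)
    exact Prod.ext (funext fun i => congrArg Prod.fst (h' i))
      (funext fun i => congrArg Prod.snd (h' i))
  have hprod : ∀ q1 q2, (List.ofFn (Φ (q1, q2))).prod
      = (List.ofFn q1).prod.subtypeCongr (List.ofFn q2).prod := by
    intro q1 q2
    have h1 := map_list_prod (subtypeCongrHom p) (List.ofFn fun i => (q1 i, q2 i))
    have h2 : (List.ofFn fun i => (q1 i, q2 i)).prod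
        = ((List.ofFn q1).prod, (List.ofFn q2).prod) := by
      apply Prod.ext
      · have := map_list_prod (MonoidHom.fst (Perm {v // p v}) (Perm {v // ¬ p v}))
          (List.ofFn fun i => (q1 i, q2 i))
        rw [List.map_ofFn] at this
        exact this
      · have := map_list_prod (MonoidHom.snd (Perm {v // p v}) (Perm {v // ¬ p v}))
          (List.ofFn fun i => (q1 i, q2 i))
        rw [List.map_ofFn] at this
        exact this
    rw [h2, List.map_ofFn] at h1
    exact h1.symm
  rw [← Set.ncard_prod, ← Set.ncard_image_of_injective _ hΦ]
  congr 1
  ext β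
  constructor
  · rintro ⟨h1, h2, h3⟩
    have hpres : ∀ i v, p (β i v) ↔ p v := by
      intro i v
      refine mem_iff_of_minimal (List.ofFn β) ?_ (List.mem_ofFn.2 ⟨i, rfl⟩) p ?_ v
      · rw [map_ofFn_sum, h1, h2]
      · intro v
        rw [h1]
        by_cases hv : p v
        · rw [Perm.subtypeCongr.left_apply _ _ hv]
          exact iff_of_true (a ⟨v, hv⟩).2 hv
        · rw [Perm.subtypeCongr.right_apply _ _ hv]
          exact iff_of_false (b ⟨v, hv⟩).2 hv
    let q1 : Fin m → Perm {v // p v} := fun i => (β i).subtypePerm (fun v => hpres i v)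
    let q2 : Fin m → Perm {v // ¬ p v} := fun i =>
      (β i).subtypePerm (fun v => not_congr (hpres i v))
    have hq : Φ (q1, q2) = β := by
      funext i
      ext v
      by_cases hv : p v
      · simp only [Φ, Perm.subtypeCongr.left_apply _ _ hv]; rfl
      · simp only [Φ, Perm.subtypeCongr.right_apply _ _ hv]; rfl
    have e := hprod q1 q2
    rw [hq, h1] at e
    have e' : (a, b) = ((List.ofFn q1).prod, (List.ofFn q2).prod) :=
      subtypeCongrHom_injective p e
    have ea : (List.ofFn q1).prod = a := (congrArg Prod.fst e').symm
    have eb : (List.ofFn q2).prod = b := (congrArg Prod.snd e').symm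
    have l1 := permLength_prod_le (List.ofFn q1)
    have l2 := permLength_prod_le (List.ofFn q2)
    rw [map_ofFn_sum, ea] at l1
    rw [map_ofFn_sum, eb] at l2
    have hs : ∑ i, permLength (β i) = ∑ i, permLength (q1 i) + ∑ i, permLength (q2 i) := by
      rw [← Finset.sum_add_distrib]
      refine Finset.sum_congr rfl fun i _ => ?_
      rw [← permLength_subtypeCongr, ← hq]
    rw [h2, permLength_subtypeCongr] at hs
    have s1 : ∑ i, permLength (q1 i) = permLength a := by omega
    have s2 : ∑ i, permLength (q2 i) = permLength b := by omega
    refine ⟨(q1, q2), ⟨⟨ea, s1, fun i hi => absurd i.2 (by omega)⟩, eb, s2, ?_⟩, hq⟩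
    intro i hi
    apply Subtype.ext
    exact h3 i hi
  · rintro ⟨⟨q1, q2⟩, ⟨⟨h1, h2, -⟩, h4, h5, h6⟩, rfl⟩
    refine ⟨by rw [hprod, h1, h4], ?_, ?_⟩
    · simp only [Φ, permLength_subtypeCongr, Finset.sum_add_distrib]
      rw [h2, h5]
    · intro i hi
      simp only [Φ, Perm.subtypeCongr.right_apply _ _ x.2]
      exact congrArg Subtype.val (h6 i hi)

/-- The product of the factors after the `j`-th one. -/
def tailProd {V : Type*} {m : ℕ} (j : ℕ) (β : Fin m → Perm V) : Perm V :=
  ((List.ofFn β).drop (j + 1)).prod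

lemma ofFn_update {V : Type*} {m : ℕ} (β : Fin m → Perm V) (j : Fin m) (σ : Perm V) :
    List.ofFn (Function.update β j σ) = (List.ofFn β).set j σ := by
  apply List.ext_getElem
  · simp
  · intro i h1 h2
    rw [List.getElem_set]
    simp only [List.getElem_ofFn]
    by_cases h : j.1 = i
    · subst h; simp
    · rw [if_neg h, Function.update_of_ne]
      intro h'
      apply h
      rw [← h']

lemma tailProd_update {V : Type*} {m : ℕ} (β : Fin m → Perm V) (j : Fin m) (σ : Perm V) :
    tailProd j (Function.update β j σ) = tailProd j β := by
  rw [tailProd, ofFn_update, List.drop_set_of_lt (by omega), tailProd]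

/-- Replacing `β_j` by `β_j * τ` multiplies the product by a conjugate of `τ`. -/
lemma prod_ofFn_update {V : Type*} {m : ℕ} (β : Fin m → Perm V) (j : Fin m) (τ : Perm V) :
    (List.ofFn (Function.update β j (β j * τ))).prod
      = (List.ofFn β).prod * ((tailProd j β)⁻¹ * τ * tailProd j β) := by
  have h1 : (List.ofFn β).prod
      = ((List.ofFn β).take j).prod * β j * tailProd j β := by
    conv_lhs => rw [← Function.update_eq_self j β]
    rw [ofFn_update, List.prod_set]
    simp [tailProd]
  rw [h1, ofFn_update, List.prod_set]
  simp only [List.length_ofFn, j.2, if_true]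
  rw [← tailProd]
  group

lemma list_prod_apply_eq {V : Type*} (x : V) (l : List (Perm V)) (h : ∀ σ ∈ l, σ x = x) :
    l.prod x = x := by
  induction l with
  | nil => simp
  | cons a l ih =>
    rw [List.prod_cons, Perm.mul_apply, ih (fun σ hσ => h σ (List.mem_cons_of_mem _ hσ)),
      h a List.mem_cons_self]

lemma tailProd_apply {V : Type*} {m : ℕ} (β : Fin m → Perm V) (j : ℕ) (x : V)
    (h : ∀ i : Fin m, j + 1 ≤ i.1 → β i x = x) : tailProd j β x = x := by
  apply list_prod_apply_eq
  intro σ hσ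
  obtain ⟨i, hi, rfl⟩ := List.mem_drop_iff_getElem.1 hσ
  rw [List.getElem_ofFn]
  exact h _ (by simp)

/-- The operation multiplying `β_j` by a transposition so that the whole product is multiplied by
`swap x w` whenever the later factors fix `x`. -/
def cutAt {V : Type*} [DecidableEq V] {m : ℕ} (j : Fin m) (x w : V) (β : Fin m → Perm V) :
    Fin m → Perm V :=
  Function.update β j (β j * swap x (tailProd j β w))

lemma cutAt_cutAt {V : Type*} [DecidableEq V] {m : ℕ} (j : Fin m) (x w : V)
    (β : Fin m → Perm V) : cutAt j x w (cutAt j x w β) = β := by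
  simp [cutAt, tailProd_update, mul_assoc]

lemma prod_cutAt {V : Type*} [DecidableEq V] {m : ℕ} (j : Fin m) (x w : V) (β : Fin m → Perm V)
    (h : tailProd j β x = x) :
    (List.ofFn (cutAt j x w β)).prod = (List.ofFn β).prod * swap x w := by
  rw [cutAt, prod_ofFn_update]
  congr 1
  have h' : (tailProd j β)⁻¹ x = x := by rw [Perm.inv_eq_iff_eq, h]
  have := swap_mul_eq_mul_swap (tailProd j β) x (tailProd j β w)
  rw [← Perm.mul_apply _ _ w, inv_mul_cancel, Perm.one_apply, h'] at this
  rw [mul_assoc, this, inv_mul_cancel_left]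

lemma sum_cutAt {V : Type*} [Fintype V] [DecidableEq V] {m : ℕ} (j : Fin m) (x w : V)
    (β : Fin m → Perm V) :
    ∑ i, permLength (cutAt j x w β i) + permLength (β j)
      = ∑ i, permLength (β i) + permLength (β j * swap x (tailProd j β w)) := by
  rw [← Finset.add_sum_erase _ _ (Finset.mem_univ j),
    ← Finset.add_sum_erase Finset.univ (fun i => permLength (β i)) (Finset.mem_univ j)]
  have : ∑ i ∈ Finset.univ.erase j, permLength (cutAt j x w β i)
      = ∑ i ∈ Finset.univ.erase j, permLength (β i) := by
    refine Finset.sum_congr rfl fun i hi => ?_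
    rw [cutAt, Function.update_of_ne (Finset.ne_of_mem_erase hi)]
  rw [this, cutAt, Function.update_self]
  omega

/-- The factorizations of `γ` for which `w` is sent to `x` by the factors from the `j`-th one on
correspond to the factorizations of `γ * swap x w` with one more factor fixing `x`. -/
lemma ncard_fiber {V : Type*} [Fintype V] [DecidableEq V] {m : ℕ} (j : Fin m) (x w : V)
    (γ : Perm V) (hγ : w ≠ x → permLength (γ * swap x w) + 1 = permLength γ) :
    {β ∈ minFact m (j + 1) x γ | (β j * tailProd j β) w = x}.ncard
      = (minFact m j x (γ * swap x w)).ncard := by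
  have hinj : Function.Injective (cutAt (V := V) j x w) :=
    Function.LeftInverse.injective (cutAt_cutAt j x w)
  rw [← Set.ncard_image_of_injective _ hinj]
  congr 1
  ext β
  constructor
  · rintro ⟨β, ⟨⟨h1, h2, h3⟩, h4⟩, rfl⟩
    have ht := tailProd_apply β j x h3
    have hp := prod_cutAt j x w β ht
    rw [h1] at hp
    have hs := sum_cutAt j x w β
    refine ⟨hp, ?_, ?_⟩
    · have hle := permLength_prod_le (List.ofFn (cutAt j x w β))
      rw [map_ofFn_sum, hp] at hle
      by_cases hw : w = x
      · subst hw
        rw [ht, swap_self, ← Perm.one_def, mul_one] at hs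
        rw [swap_self, ← Perm.one_def, mul_one]
        omega
      · have hne : tailProd j β w ≠ x := by
          intro h
          exact hw ((tailProd j β).injective (h.trans ht.symm))
        have hlt := permLength_mul_swap_lt (β j) (x := x) (z := tailProd j β w) h4 hne
        have := hγ hw
        omega
    · intro i hi
      by_cases hij : i = j
      · subst hij
        rw [cutAt, Function.update_self, Perm.mul_apply, swap_apply_left]
        exact h4
      · rw [cutAt, Function.update_of_ne hij]
        exact h3 i (by have : i.1 ≠ j.1 := fun h => hij (Fin.ext h)
                       omega)
  · rintro ⟨h1, h2, h3⟩
    refine ⟨cutAt j x w β, ⟨⟨?_, ?_, ?_⟩, ?_⟩, cutAt_cutAt j x w β⟩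
    all_goals have ht := tailProd_apply β j x (fun i hi => h3 i (by omega))
    all_goals have hp := prod_cutAt j x w β ht
    all_goals rw [h1, mul_assoc, swap_mul_self, mul_one] at hp
    · exact hp
    · have hs := sum_cutAt j x w β
      have hle := permLength_prod_le (List.ofFn (cutAt j x w β))
      rw [map_ofFn_sum, hp] at hle
      by_cases hw : w = x
      · subst hw
        rw [ht, swap_self, ← Perm.one_def, mul_one] at hs
        rw [swap_self, ← Perm.one_def, mul_one] at h2
        omega
      · have := permLength_mul_swap_le (β j) x (tailProd j β w)
        have := hγ hw
        omega
    · intro i hi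
      rw [cutAt, Function.update_of_ne]
      · exact h3 i (by omega)
      · rintro rfl; omega
    · rw [cutAt, Function.update_self, tailProd_update, Perm.mul_apply, Perm.mul_apply,
        swap_apply_right]
      exact h3 j le_rfl

/-! ### Cutting and counting full cycles -/

lemma isCycleOn_subtypePerm {V : Type*} [Fintype V] [DecidableEq V] (p : V → Prop)
    [DecidablePred p] {δ : Perm V} (h : ∀ v, p (δ v) ↔ p v)
    (hδ : ∀ u v, p u → p v → δ.SameCycle u v) :
    (δ.subtypePerm h).IsCycleOn (Finset.univ : Finset {v // p v}) := by
  refine ⟨by simp, fun u _ v _ => ?_⟩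
  rw [sameCycle_subtypePerm]
  exact hδ u v u.2 v.2

/-- Multiplying a full cycle by a transposition cuts it into two cycles. -/
lemma exists_split_s11 {V : Type*} [Fintype V] [DecidableEq V] {n : ℕ}
    (hV : Fintype.card V = n + 1) {γ : Perm V} (hγ : γ.IsCycleOn (Finset.univ : Finset V))
    (x : V) {a : ℕ} (ha : 1 ≤ a) (han : a ≤ n) :
    ∃ (p : V → Prop) (_ : DecidablePred p) (A : Perm {v // p v}) (B : Perm {v // ¬ p v}),
      γ * swap x ((γ ^ a) x) = A.subtypeCongr B ∧ p ((γ ^ a) x) ∧ ¬ p x ∧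
      Fintype.card {v // p v} = a ∧
      A.IsCycleOn (Finset.univ : Finset {v // p v}) ∧
      B.IsCycleOn (Finset.univ : Finset {v // ¬ p v}) := by
  have hcard : (Finset.univ : Finset V).card = n + 1 := by rw [Finset.card_univ, hV]
  have hinj : ∀ i k : ℕ, 1 ≤ i → i ≤ n + 1 → 1 ≤ k → k ≤ n + 1 →
      (γ ^ i) x = (γ ^ k) x → i = k := by
    intro i k hi hi' hk hk' h
    rw [hγ.pow_apply_eq_pow_apply (Finset.mem_univ x), hcard] at h
    rcases Nat.lt_trichotomy i k with h1 | h1 | h1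
    · have := (Nat.modEq_iff_dvd' h1.le).1 h
      have := Nat.le_of_dvd (by omega) this
      omega
    · exact h1
    · have := (Nat.modEq_iff_dvd' h1.le).1 h.symm
      have := Nat.le_of_dvd (by omega) this
      omega
  have hx : (γ ^ (n + 1)) x = x := by
    rw [← hcard]; exact hγ.pow_card_apply (Finset.mem_univ x)
  have hex : ∀ v, ∃ i, 1 ≤ i ∧ i ≤ n + 1 ∧ (γ ^ i) x = v := by
    intro v
    obtain ⟨i, hi, h⟩ := hγ.exists_pow_eq (Finset.mem_univ x) (Finset.mem_univ v)
    rw [hcard] at hi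
    rcases Nat.eq_zero_or_pos i with h0 | h0
    · subst h0
      refine ⟨n + 1, by omega, le_rfl, ?_⟩
      rw [hx, ← h, pow_zero, Perm.one_apply]
    · exact ⟨i, h0, hi.le, h⟩
  set w := (γ ^ a) x with hw
  set δ := γ * swap x w with hδ
  have hγw : γ w = (γ ^ (a + 1)) x := by rw [pow_succ', Perm.mul_apply]
  have hδw : δ w = (γ ^ 1) x := by rw [hδ, Perm.mul_apply, swap_apply_right, pow_one]
  have hδx : δ x = (γ ^ (a + 1)) x := by rw [hδ, Perm.mul_apply, swap_apply_left, hγw]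
  have hδi : ∀ i, 1 ≤ i → i ≤ n → i ≠ a → δ ((γ ^ i) x) = (γ ^ (i + 1)) x := by
    intro i h1 h2 h3
    rw [hδ, Perm.mul_apply, swap_apply_of_ne_of_ne, pow_succ', Perm.mul_apply]
    · intro h
      have := hinj i (n + 1) h1 (by omega) (by omega) le_rfl (by rw [h, hx])
      omega
    · intro h
      exact h3 (hinj i a h1 (by omega) (by omega) (by omega) h)
  let S : Finset V := (Finset.Icc 1 a).image (fun i => (γ ^ i) x)
  have hS : ∀ i, 1 ≤ i → i ≤ n + 1 → ((γ ^ i) x ∈ S ↔ i ≤ a) := by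
    intro i h1 h2
    simp only [S, Finset.mem_image, Finset.mem_Icc]
    constructor
    · rintro ⟨k, ⟨hk, hk'⟩, h⟩
      have := hinj k i hk (by omega) h1 h2 h
      omega
    · intro h
      exact ⟨i, ⟨h1, h⟩, rfl⟩
  have hpres : ∀ v, δ v ∈ S ↔ v ∈ S := by
    intro v
    obtain ⟨i, h1, h2, rfl⟩ := hex v
    by_cases hia : i = a
    · subst hia
      rw [hδw, hS 1 le_rfl (by omega), hS i h1 h2]
      omega
    · by_cases hin : i = n + 1
      · subst hin
        rw [hS _ h1 h2, hx, hδx, hS _ (by omega) (by omega)]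
        omega
      · rw [hδi i h1 (by omega) hia, hS _ (by omega) (by omega), hS _ h1 h2]
        omega
  have hcycA : ∀ i, i + 1 ≤ a → δ.SameCycle w ((γ ^ (i + 1)) x) := by
    intro i
    induction i with
    | zero => intro _; rw [zero_add, ← hδw, sameCycle_apply_right]
    | succ i ih =>
      intro h
      rw [← hδi (i + 1) (by omega) (by omega) (by omega), sameCycle_apply_right]
      exact ih (by omega)
  have hcycB : ∀ i, a + i + 1 ≤ n + 1 → δ.SameCycle x ((γ ^ (a + i + 1)) x) := by
    intro i
    induction i with
    | zero => intro _; rw [add_zero, ← hδx, sameCycle_apply_right]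
    | succ i ih =>
      intro h
      rw [← hδi (a + (i + 1)) (by omega) (by omega) (by omega), sameCycle_apply_right]
      exact ih (by omega)
  have hA : ∀ v ∈ S, δ.SameCycle w v := by
    intro v hv
    obtain ⟨i, h1, h2, rfl⟩ := hex v
    rw [hS i h1 h2] at hv
    have := hcycA (i - 1) (by omega)
    rwa [Nat.sub_add_cancel h1] at this
  have hB : ∀ v ∉ S, δ.SameCycle x v := by
    intro v hv
    obtain ⟨i, h1, h2, rfl⟩ := hex v
    rw [hS i h1 h2] at hv
    have := hcycB (i - a - 1) (by omega)
    rwa [show a + (i - a - 1) + 1 = i by omega] at this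
  refine ⟨fun v => v ∈ S, inferInstance, δ.subtypePerm hpres,
    δ.subtypePerm (fun v => not_congr (hpres v)), ?_, ?_, ?_, ?_, ?_, ?_⟩
  · ext v
    by_cases hv : v ∈ S
    · rw [Perm.subtypeCongr.left_apply _ _ hv]; rfl
    · rw [Perm.subtypeCongr.right_apply _ _ hv]; rfl
  · exact (hS a ha (by omega)).2 le_rfl
  · change x ∉ S
    rw [← hx, hS (n + 1) (by omega) le_rfl]
    omega
  · refine (@Fintype.card_of_subtype V (fun v => v ∈ S) S (fun _ => Iff.rfl)
      (Subtype.fintype _)).trans ?_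
    rw [Finset.card_image_of_injOn, Nat.card_Icc]
    · omega
    · intro i hi k hk h
      simp only [Finset.coe_Icc, Set.mem_Icc] at hi hk
      exact hinj i k hi.1 (by omega) hk.1 (by omega) h
  · exact isCycleOn_subtypePerm _ _ (fun u v hu hv => (hA u hu).symm.trans (hA v hv))
  · exact isCycleOn_subtypePerm _ _ (fun u v hu hv => (hB u hu).symm.trans (hB v hv))

lemma ncard_minFact_zero {V : Type*} [Fintype V] [DecidableEq V] (m n : ℕ)
    (hV : Fintype.card V = n + 1) {γ : Perm V} (hγ : γ.IsCycleOn (Finset.univ : Finset V))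
    (x : V) : (minFact m 0 x γ).ncard = raney m n 0 := by
  cases n with
  | zero =>
    have : Subsingleton V := Fintype.card_le_one_iff_subsingleton.1 (by omega)
    rw [raney, Set.ncard_eq_one]
    refine ⟨fun _ => 1, ?_⟩
    ext β
    rw [Set.mem_singleton_iff]
    constructor
    · intro _
      exact Subsingleton.elim _ _
    · rintro rfl
      refine ⟨Subsingleton.elim _ _, ?_, fun i _ => rfl⟩
      rw [Subsingleton.elim γ 1]
      simp [permLength]
  | succ n =>
    rw [raney, Set.ncard_eq_zero]
    ext β
    simp only [Set.mem_empty_iff_false, iff_false]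
    rintro ⟨h1, -, h3⟩
    have hfix : γ x = x := by
      rw [← h1]
      apply list_prod_apply_eq
      intro σ hσ
      obtain ⟨i, rfl⟩ := List.mem_ofFn.1 hσ
      exact h3 i (Nat.zero_le _)
    have := (hγ.pow_apply_eq (Finset.mem_univ x) (n := 1)).1 (by rw [pow_one, hfix])
    rw [Finset.card_univ, hV] at this
    have := Nat.le_of_dvd one_pos this
    omega

/-- The number of minimal factorizations of an `(n + 1)`-cycle whose last `m - j` factors fix `x`
is `[X ^ n] F ^ j`. -/
lemma ncard_minFact (m n : ℕ) : ∀ j, j ≤ m → ∀ {V : Type} [Fintype V] [DecidableEq V],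
    Fintype.card V = n + 1 → ∀ γ : Perm V, γ.IsCycleOn (Finset.univ : Finset V) → ∀ x : V,
    (minFact m j x γ).ncard = raney m n j := by
  induction n using Nat.strong_induction_on with
  | _ n ihn =>
  intro j
  induction j with
  | zero =>
    intro _ V _ _ hV γ hγ x
    exact ncard_minFact_zero m n hV hγ x
  | succ j ihj =>
    intro hj V _ _ hV γ hγ x
    -- Cutting at `w = γ ^ a x` leaves an `a`-cycle and an `(n + 1 - a)`-cycle through `x`.
    have hcut : ∀ a, 1 ≤ a → a ≤ n → permLength (γ * swap x ((γ ^ a) x)) + 1 = permLength γ ∧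
        (minFact m j x (γ * swap x ((γ ^ a) x))).ncard = raney m a 1 * raney m (n - a) j := by
      intro a ha han
      obtain ⟨p, _, A, B, hAB, hwS, hxS, cA, hA, hB⟩ := exists_split_s11 hV hγ x ha han
      have cB : Fintype.card {v // ¬ p v} = n - a + 1 := by
        rw [Fintype.card_subtype_compl, hV, cA]; omega
      have : Nonempty V := ⟨x⟩
      have : Nonempty {v // p v} := ⟨⟨_, hwS⟩⟩
      have : Nonempty {v // ¬ p v} := ⟨⟨x, hxS⟩⟩
      have l1 := permLength_of_isCycleOn hA
      have l2 := permLength_of_isCycleOn hB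
      have l3 := permLength_of_isCycleOn hγ
      rw [hAB]
      constructor
      · rw [permLength_subtypeCongr]; omega
      · have h := ncard_minFact_subtypeCongr m j p A B ⟨_, hwS⟩ ⟨x, hxS⟩
        rw [h, ihn (n - a) (by omega) j (by omega) cB B hB,
          ihn (a - 1) (by omega) m le_rfl (by omega) A hA]
        obtain ⟨b, rfl⟩ : ∃ b, a = b + 1 := ⟨a - 1, by omega⟩
        simp [raney]
    have hcard : (Finset.univ : Finset V).card = n + 1 := by rw [Finset.card_univ, hV]
    classical
    let J : Fin m := ⟨j, hj⟩
    let s : Finset (Fin m → Perm V) := Finset.univ.filter (· ∈ minFact m (j + 1) x γ)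
    have hs : (minFact m (j + 1) x γ).ncard = s.card := by
      rw [← Set.ncard_coe_finset]
      simp [s]
    have hfib := Finset.card_eq_sum_card_fiberwise (s := s) (t := Finset.univ)
      (f := fun β => (β J * tailProd J β)⁻¹ x) (fun _ _ => Finset.mem_coe.2 (Finset.mem_univ _))
    have hsum : ∀ g : V → ℕ, ∑ w, g w = ∑ a ∈ Finset.range (n + 1), g ((γ ^ a) x) := by
      intro g
      symm
      refine Finset.sum_bij (fun a _ => (γ ^ a) x) (fun _ _ => Finset.mem_univ _) ?_ ?_
        (fun _ _ => rfl)
      · intro i hi k hk h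
        rw [hγ.pow_apply_eq_pow_apply (Finset.mem_univ x), hcard] at h
        exact Nat.ModEq.eq_of_lt_of_lt h (Finset.mem_range.1 hi) (Finset.mem_range.1 hk)
      · intro v _
        obtain ⟨i, hi, h⟩ := hγ.exists_pow_eq (Finset.mem_univ x) (Finset.mem_univ v)
        rw [hcard] at hi
        exact ⟨i, Finset.mem_range.2 hi, h⟩
    rw [hs, hfib, hsum, add_comm j 1, ← sum_raney_mul m j n 1]
    refine Finset.sum_congr rfl fun a ha => ?_
    have han : a ≤ n := Nat.lt_succ_iff.1 (Finset.mem_range.1 ha)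
    have hset : (s.filter fun β => (β J * tailProd J β)⁻¹ x = (γ ^ a) x).card
        = {β ∈ minFact m (J + 1) x γ | (β J * tailProd J β) ((γ ^ a) x) = x}.ncard := by
      rw [← Set.ncard_coe_finset]
      congr 1
      ext β
      simp only [s, Finset.coe_filter, Finset.mem_filter, Finset.mem_univ, true_and,
        Set.mem_ofPred_eq, Perm.inv_eq_iff_eq]
      rw [eq_comm (a := x)]
    rw [hset]
    rcases Nat.eq_zero_or_pos a with h0 | h0
    · subst h0
      rw [ncard_fiber J x ((γ ^ 0) x) γ (fun h => absurd rfl h)]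
      simp only [pow_zero, Perm.one_apply, swap_self]
      rw [← Perm.one_def, mul_one, ihj (by omega) hV γ hγ x]
      simp [raney]
    · rw [ncard_fiber J x _ γ (fun _ => (hcut a h0 han).1)]
      exact (hcut a h0 han).2

/-! ### Geodesic tuples -/

lemma cayleyLength_eq {n : ℕ} (σ : Perm (Fin n)) : cayleyLength σ = permLength σ := by
  have h := permLength_add_card σ
  have h2 := Finset.card_le_univ σ.support
  rw [Fintype.card_fin] at h2
  unfold cayleyLength cycleCount
  omega

lemma isCycleOn_of_cycleCount {n : ℕ} {γ : Perm (Fin n)} (hγ : cycleCount γ = 1) :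
    γ.IsCycleOn (Finset.univ : Finset (Fin n)) := by
  refine ⟨by simp, ?_⟩
  have h2 : Multiset.card γ.cycleType = γ.cycleFactorsFinset.card := by
    simp [cycleType_def]
  have h : (Finset.univ.image (orbitLabel γ)).card = 1 := by
    rw [image_orbitLabel, Finset.card_disjSum, Finset.card_compl, ← h2, Fintype.card_fin]
    exact hγ
  intro u _ v _
  rw [← orbitLabel_eq_iff]
  exact Finset.card_le_one.1 h.le _ (Finset.mem_image_of_mem _ (Finset.mem_univ _)) _
    (Finset.mem_image_of_mem _ (Finset.mem_univ _))

/-- The chain `1, α₀, …, α_k, γ`. -/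
def fullChain {G : Type*} [Group G] {k : ℕ} (γ : G) (α : Fin (k + 1) → G) : Fin (k + 3) → G :=
  Fin.cons 1 (Fin.snoc α γ)

/-- The successive quotients of the chain `1, α₀, …, α_k, γ`. -/
def chainSteps {G : Type*} [Group G] {k : ℕ} (γ : G) (α : Fin (k + 1) → G) (i : Fin (k + 2)) : G :=
  (fullChain γ α i.castSucc)⁻¹ * fullChain γ α i.succ

lemma partialProd_chainSteps {G : Type*} [Group G] {k : ℕ} (γ : G) (α : Fin (k + 1) → G) :
    Fin.partialProd (chainSteps γ α) = fullChain γ α := by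
  have h := Fin.partialProd_left_inv (fullChain γ α)
  have h0 : fullChain γ α 0 = 1 := rfl
  rw [h0, one_smul] at h
  exact h

lemma fullChain_succ_castSucc {G : Type*} [Group G] {k : ℕ} (γ : G) (α : Fin (k + 1) → G)
    (i : Fin (k + 1)) : fullChain γ α i.castSucc.succ = α i := by
  simp [fullChain]

lemma fullChain_last {G : Type*} [Group G] {k : ℕ} (γ : G) (α : Fin (k + 1) → G) :
    fullChain γ α (Fin.last (k + 2)) = γ := by
  rw [← Fin.succ_last]
  simp [fullChain]

lemma prod_ofFn_eq {G : Type*} [Group G] {m : ℕ} (β : Fin m → G) :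
    (List.ofFn β).prod = Fin.partialProd β (Fin.last m) := by
  rw [Fin.partialProd, List.take_of_length_le (by simp)]

lemma sum_chainSteps {G : Type*} [Group G] {k : ℕ} (γ : G) (α : Fin (k + 1) → G) (f : G → ℕ) :
    ∑ i, f (chainSteps γ α i) = f (α 0) + (∑ i : Fin k, f ((α i.castSucc)⁻¹ * α i.succ))
      + f ((α (Fin.last k))⁻¹ * γ) := by
  rw [Fin.sum_univ_succ, Fin.sum_univ_castSucc, ← add_assoc]
  have h0 : chainSteps γ α 0 = α 0 := by
    have h1 : fullChain γ α (Fin.castSucc 0) = 1 := rfl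
    have h2 := fullChain_succ_castSucc γ α 0
    rw [Fin.castSucc_zero] at h2
    rw [chainSteps, h1, h2, inv_one, one_mul]
  have h1 : ∀ i : Fin k, chainSteps γ α i.castSucc.succ = (α i.castSucc)⁻¹ * α i.succ := by
    intro i
    have h1 := fullChain_succ_castSucc γ α i.castSucc
    have h2 := fullChain_succ_castSucc γ α i.succ
    rw [chainSteps, ← Fin.succ_castSucc, h1, Fin.succ_castSucc, h2]
  have h2 : chainSteps γ α (Fin.last k).succ = (α (Fin.last k))⁻¹ * γ := by
    have h1 := fullChain_succ_castSucc γ α (Fin.last k)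
    have h2 := fullChain_last γ α
    rw [chainSteps, ← Fin.succ_castSucc, h1, Fin.succ_last, Fin.succ_last, h2]
  rw [h0, h2]
  simp only [h1]

/-- The number of `s`-tuples (here `s = k + 1 ≥ 1`) of permutations of `Fin n` satisfying the
geodesic equation `|α₁| + Σ |αᵢ⁻¹ αᵢ₊₁| + |α_s⁻¹ γ| = n - 1` equals the Fuss–Catalan number
`FC_{n,s} = (1/(sn+1)) · binom(sn + n, n)`. -/
theorem card_geodesic_tuples_eq_fussCatalan (n k : ℕ) (hn : 1 ≤ n)
    (γ : Equiv.Perm (Fin n)) (hγ : cycleCount γ = 1) :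
    {α : Fin (k + 1) → Equiv.Perm (Fin n) |
        cayleyLength (α 0)
          + (∑ i : Fin k, cayleyLength ((α i.castSucc)⁻¹ * α i.succ))
          + cayleyLength ((α (Fin.last k))⁻¹ * γ) = n - 1}.ncard
      = ((k + 1) * n + n).choose n / ((k + 1) * n + 1) := by
  obtain ⟨N, rfl⟩ : ∃ N, n = N + 1 := ⟨n - 1, by omega⟩
  have hcyc := isCycleOn_of_cycleCount hγ
  have hlen := permLength_of_isCycleOn hcyc
  rw [Fintype.card_fin] at hlen
  have hmain := ncard_minFact (k + 2) N (k + 2) le_rfl (Fintype.card_fin _) γ hcyc 0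
  have hr : raney (k + 2) (N + 1) 1 = raney (k + 2) N (k + 2) := by simp [raney]
  rw [← raney_one, hr, ← hmain]
  have hinj : Function.Injective (chainSteps (k := k) γ) := by
    intro α α' h
    have h' := congrArg Fin.partialProd h
    rw [partialProd_chainSteps, partialProd_chainSteps] at h'
    funext i
    rw [← fullChain_succ_castSucc γ α i, h', fullChain_succ_castSucc]
  rw [← Set.ncard_image_of_injective _ hinj]
  congr 1
  ext β
  simp only [cayleyLength_eq]
  constructor
  · rintro ⟨α, hα, rfl⟩
    refine ⟨?_, ?_, fun i hi => absurd i.2 (by omega)⟩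
    · rw [prod_ofFn_eq, partialProd_chainSteps, fullChain_last]
    · rw [sum_chainSteps, hα]
      omega
  · rintro ⟨h1, h2, -⟩
    have hchain : fullChain γ (fun i => Fin.partialProd β i.castSucc.succ)
        = Fin.partialProd β := by
      funext i
      refine Fin.cases ?_ (fun i => ?_) i
      · rw [Fin.partialProd_zero]; rfl
      · refine Fin.lastCases ?_ (fun i => ?_) i
        · rw [Fin.succ_last, fullChain_last, ← prod_ofFn_eq, h1]
        · rw [fullChain_succ_castSucc]
    have hβ : chainSteps γ (fun i => Fin.partialProd β i.castSucc.succ) = β := by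
      funext i
      rw [chainSteps, hchain, Fin.partialProd_right_inv]
    refine ⟨_, ?_, hβ⟩
    have h3 := sum_chainSteps γ (fun i => Fin.partialProd β i.castSucc.succ) permLength
    rw [hβ, h2] at h3
    rw [Set.mem_ofPred_eq, ← h3]
    omega
end

section
/- Fix n ≥ 1 and let Geo_n := { α ∈ S_n : |α| + |α⁻¹γ_n| = n − 1 } be the set of permutations on a geodesic between id and the full cycle γ_n. Define the relation ⪯ on Geo_n by α ⪯ β if and only if |α| + |α⁻¹β| + |β⁻¹γ_n| = n − 1. Then ⪯ is a partial order on Geo_n: it is reflexive, antisymmetric, and transitive. -/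
open Equiv.Perm

/-- The space of rational-valued functions on `Fin n` that are invariant under `σ`. -/
def invariants {n : ℕ} (σ : Equiv.Perm (Fin n)) : Submodule ℚ (Fin n → ℚ) where
  carrier := {g | ∀ x, g (σ x) = g x}
  add_mem' := fun ha hb x => by simp [ha x, hb x]
  zero_mem' := fun _ => rfl
  smul_mem' := fun c _ ha x => by simp [ha x]

/-- A finite set indexing the cycles of `σ`: the nontrivial cycle factors, together with the
fixed points. -/
def cycleIndex {n : ℕ} (σ : Equiv.Perm (Fin n)) :
    Finset (Equiv.Perm (Fin n) ⊕ Fin n) :=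
  σ.cycleFactorsFinset.disjSum σ.supportᶜ

/-- The map sending a point to the index of the cycle of `σ` containing it. -/
def cycleContaining {n : ℕ} (σ : Equiv.Perm (Fin n)) (x : Fin n) : cycleIndex σ :=
  if h : x ∈ σ.support then
    ⟨Sum.inl (σ.cycleOf x), Finset.inl_mem_disjSum.2 (cycleOf_mem_cycleFactorsFinset_iff.2 h)⟩
  else ⟨Sum.inr x, Finset.inr_mem_disjSum.2 (Finset.mem_compl.2 h)⟩

lemma card_cycleIndex {n : ℕ} (σ : Equiv.Perm (Fin n)) :
    (cycleIndex σ).card = cycleCount σ := by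
  simp [cycleIndex, cycleCount, cycleType_def, Finset.card_compl]

lemma cycleContaining_surjective {n : ℕ} (σ : Equiv.Perm (Fin n)) :
    Function.Surjective (cycleContaining σ) := by
  rintro ⟨c | x, h⟩
  · have hc := Finset.inl_mem_disjSum.1 h
    obtain ⟨x, hx⟩ := (mem_cycleFactorsFinset_iff.1 hc).1.nonempty_support
    refine ⟨x, ?_⟩
    have hx' := mem_cycleFactorsFinset_support_le hc hx
    simp only [cycleContaining, dif_pos hx', cycle_is_cycleOf hx hc]
  · have hx := Finset.mem_compl.1 (Finset.inr_mem_disjSum.1 h)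
    exact ⟨x, by simp only [cycleContaining, dif_neg hx]⟩

lemma cycleContaining_apply {n : ℕ} (σ : Equiv.Perm (Fin n)) (x : Fin n) :
    cycleContaining σ (σ x) = cycleContaining σ x := by
  by_cases h : x ∈ σ.support
  · have h' : σ x ∈ σ.support := apply_mem_support.2 h
    simp only [cycleContaining, dif_pos h, dif_pos h', cycleOf_self_apply]
  · rw [notMem_support.1 h]

lemma sameCycle_of_cycleContaining_eq {n : ℕ} {σ : Equiv.Perm (Fin n)} {x y : Fin n}
    (h : cycleContaining σ x = cycleContaining σ y) : σ.SameCycle x y := by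
  replace h := congrArg Subtype.val h
  by_cases hx : x ∈ σ.support <;> by_cases hy : y ∈ σ.support <;>
    simp only [cycleContaining, hx, hy, dite_true, dite_false, Sum.inl.injEq, Sum.inr.injEq,
      reduceCtorEq] at h
  · exact (sameCycle_iff_cycleOf_eq_of_mem_support hx hy).2 h
  · exact h ▸ SameCycle.refl σ x

lemma eq_of_mem_invariants {n : ℕ} {σ : Equiv.Perm (Fin n)} {g : Fin n → ℚ}
    (hg : g ∈ invariants σ) {x y : Fin n} (h : σ.SameCycle x y) : g x = g y := by
  obtain ⟨i, -, -, rfl⟩ := h.exists_pow_eq σ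
  induction i with
  | zero => rfl
  | succ i ih =>
    rw [pow_succ', mul_apply, hg]
    exact ih ⟨i, by simp⟩

/-- Pulling back along `cycleContaining` identifies functions on the set of cycles with invariant
functions. -/
lemma finrank_invariants {n : ℕ} (σ : Equiv.Perm (Fin n)) :
    Module.finrank ℚ (invariants σ) = cycleCount σ := by
  have hr : invariants σ = LinearMap.range (LinearMap.funLeft ℚ ℚ (cycleContaining σ)) := by
    ext g
    constructor
    · intro hg
      have hf : g.FactorsThrough (cycleContaining σ) := fun x y h =>
        eq_of_mem_invariants hg (sameCycle_of_cycleContaining_eq h)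
      exact ⟨Function.extend (cycleContaining σ) g 0, funext fun x => hf.extend_apply 0 x⟩
    · rintro ⟨k, rfl⟩ x
      simp [LinearMap.funLeft_apply, cycleContaining_apply]
  rw [hr, LinearMap.finrank_range_of_inj
    (LinearMap.funLeft_injective_of_surjective ℚ ℚ _ (cycleContaining_surjective σ)),
    Module.finrank_fintype_fun_eq_card, Fintype.card_coe, card_cycleIndex]

lemma cayleyLength_mul_le {n : ℕ} (σ τ : Equiv.Perm (Fin n)) :
    cayleyLength (σ * τ) ≤ cayleyLength σ + cayleyLength τ := by
  have hle : invariants σ ⊓ invariants τ ≤ invariants (σ * τ) := by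
    rintro g ⟨hσ, hτ⟩ x
    rw [mul_apply, hσ, hτ]
  have h1 := Submodule.finrank_mono hle
  have h2 := Submodule.finrank_sup_add_finrank_inf_eq (invariants σ) (invariants τ)
  have h3 := (invariants σ ⊔ invariants τ).finrank_le
  have h4 := (invariants σ).finrank_le
  have h5 := (invariants τ).finrank_le
  simp only [finrank_invariants, Module.finrank_fin_fun] at *
  unfold cayleyLength
  omega

lemma cayleyLength_one {n : ℕ} : cayleyLength (1 : Equiv.Perm (Fin n)) = 0 := by
  simp [cayleyLength, cycleCount]

lemma eq_one_of_cayleyLength_eq_zero {n : ℕ} {σ : Equiv.Perm (Fin n)}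
    (h : cayleyLength σ = 0) : σ = 1 := by
  -- Every nontrivial cycle moves at least two points, so a nonempty support exceeds the
  -- number of nontrivial cycles.
  have h1 : σ.cycleType.card • 2 ≤ σ.cycleType.sum :=
    Multiset.card_nsmul_le_sum fun _ hx => two_le_of_mem_cycleType hx
  rw [sum_cycleType, smul_eq_mul] at h1
  have h2 : σ.support.card ≤ n := by simpa using Finset.card_le_univ σ.support
  unfold cayleyLength cycleCount at h
  rw [← card_cycleType_eq_zero]
  omega

/-- On the set of permutations lying on a geodesic between `id` and the full cycle `γ`, the
relation `α ⪯ β ↔ |α| + |α⁻¹β| + |β⁻¹γ| = n - 1` is reflexive, antisymmetric and transitive,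
hence a partial order. -/
theorem geodesic_relation_is_partial_order (n : ℕ) (hn : 1 ≤ n)
    (γ : Equiv.Perm (Fin n)) (hγ : cycleCount γ = 1) :
    let Geo : Set (Equiv.Perm (Fin n)) :=
      {α | cayleyLength α + cayleyLength (α⁻¹ * γ) = n - 1}
    let R : Equiv.Perm (Fin n) → Equiv.Perm (Fin n) → Prop := fun α β =>
      cayleyLength α + cayleyLength (α⁻¹ * β) + cayleyLength (β⁻¹ * γ) = n - 1
    (∀ α ∈ Geo, R α α) ∧
    (∀ α ∈ Geo, ∀ β ∈ Geo, R α β → R β α → α = β) ∧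
    (∀ α ∈ Geo, ∀ β ∈ Geo, ∀ δ ∈ Geo, R α β → R β δ → R α δ) := by
  intro Geo R
  refine ⟨fun α hα => ?_, fun α hα β hβ h1 h2 => ?_, fun α hα β hβ δ hδ h1 h2 => ?_⟩
  · simpa [Geo, R, cayleyLength_one] using hα
  · simp only [Geo, R, Set.mem_ofPred_eq] at hα hβ h1 h2
    have h : cayleyLength (α⁻¹ * β) = 0 := by omega
    exact inv_mul_eq_one.1 (eq_one_of_cayleyLength_eq_zero h)
  · simp only [Geo, R, Set.mem_ofPred_eq] at hα hβ hδ h1 h2 ⊢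
    have t1 := cayleyLength_mul_le (α⁻¹ * β) (β⁻¹ * δ)
    have t2 := cayleyLength_mul_le (α⁻¹ * δ) (δ⁻¹ * γ)
    rw [mul_assoc, mul_inv_cancel_left] at t1 t2
    omega
end
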